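/- arXiv:1912.12913 — 2 statements merged into one kernel-verified Lean document; each statement's English description precedes it below -/
import Mathlib

section
/- Let d ≥ 3, p > 1, and let u be a radial function in Ḣ¹(ℝ^d) ∩ L^{p+1}(ℝ^d). Then for every r > 0, |u(r)| ≤ C(d) r^{-2(d-1)/(p+3)} ‖u‖_{Ḣ¹}^{2/(p+3)} ‖u‖_{L^{p+1}}^{(p+1)/(p+3)}. -/
open MeasureTheory Real

/-! Let `a = (p + 3) / 2`. The derivative of the profile of `|u| ^ a` is bounded by
`a |u| ^ ((p + 1) / 2) |∇u|`. Since `|u| ^ (p + 1)` is integrable, this profile tends to zero at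
infinity whenever its derivative is integrable, so `|u(r)| ^ a` is at most the integral of the
derivative over `(r, ∞)`. There the weight `s ^ (d - 1)` of polar coordinates is at least
`r ^ (d - 1)`, hence `r ^ (d - 1) |u(r)| ^ a` is controlled by the integral of
`a |u| ^ ((p + 1) / 2) |∇u|` over the whole space, and the Cauchy-Schwarz inequality concludes. The
constant does not depend on `p` because `a ^ (1 / a)` is bounded. -/

section HalfLine

open Set Filter Topology

variable {F : Type*} [NormedAddCommGroup F] {r : ℝ}

theorem tendsto_zero_of_hasDerivAt_of_integrableOn_norm_rpow_Ioi [NormedSpace ℝ F]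
    [CompleteSpace F] {f f' : ℝ → F} {q : ℝ} (hf : ∀ s ∈ Ioi r, HasDerivAt f (f' s) s)
    (hf' : IntegrableOn f' (Ioi r)) (hq : 0 < q)
    (hfq : IntegrableOn (fun s ↦ ‖f s‖ ^ q) (Ioi r)) : Tendsto f atTop (𝓝 0) := by
  have hlim := tendsto_limUnder_of_hasDerivAt_of_integrableOn_Ioi hf hf'
  have hlim_rpow := hlim.norm.rpow_const (p := q) (.inr hq.le)
  have hzero : ‖limUnder atTop f‖ ^ q = 0 :=
    IntegrableAtFilter.eq_zero_of_tendsto ⟨Ioi r, Ioi_mem_atTop r, hfq⟩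
      (fun s hs ↦ by
        obtain ⟨b, hb⟩ := mem_atTop_sets.1 hs
        exact measure_mono_top hb Real.volume_Ici) hlim_rpow
  rw [rpow_eq_zero (norm_nonneg _) hq.ne', norm_eq_zero] at hzero
  rwa [hzero] at hlim

variable [InnerProductSpace ℝ F]

theorem norm_deriv_norm_rpow_le {g : ℝ → F} {a s : ℝ}
    (hg : DifferentiableAt ℝ g s) (ha : 1 < a) :
    ‖deriv (fun t ↦ ‖g t‖ ^ a) s‖ ≤ a * (‖g s‖ ^ (a - 1) * ‖deriv g s‖) := by
  have hderiv := (hasFDerivAt_norm_rpow (g s) ha).comp_hasDerivAt s hg.hasDerivAt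
  rw [Function.comp_def] at hderiv
  rw [hderiv.deriv, ← fderiv_norm_rpow (g s) ha, ← mul_assoc, ← norm_fderiv_norm_id_rpow (g s) ha]
  exact ContinuousLinearMap.le_opNorm _ _

theorem norm_rpow_le_integral_Ioi {g : ℝ → F} {a q : ℝ}
    (hg : ∀ s ∈ Ici r, DifferentiableAt ℝ g s) (ha : 1 < a) (hq : 0 < q)
    (hderiv : IntegrableOn (fun s ↦ ‖g s‖ ^ (a - 1) * ‖deriv g s‖) (Ioi r))
    (hgq : IntegrableOn (fun s ↦ ‖g s‖ ^ q) (Ioi r)) :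
    ‖g r‖ ^ a ≤ a * ∫ s in Ioi r, ‖g s‖ ^ (a - 1) * ‖deriv g s‖ := by
  set φ : ℝ → ℝ := fun s ↦ ‖g s‖ ^ a
  have hφ (s : ℝ) (hs : s ∈ Ici r) : HasDerivAt φ (deriv φ s) s :=
    ((hasFDerivAt_norm_rpow (g s) ha).differentiableAt.comp s (hg s hs)).hasDerivAt
  have hφ_le : ∀ᵐ s ∂volume.restrict (Ioi r),
      ‖deriv φ s‖ ≤ a * (‖g s‖ ^ (a - 1) * ‖deriv g s‖) := by
    filter_upwards [ae_restrict_mem measurableSet_Ioi] with s hs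
    exact norm_deriv_norm_rpow_le (hg s (Ioi_subset_Ici_self hs)) ha
  have hφ' : IntegrableOn (deriv φ) (Ioi r) :=
    (hderiv.const_mul a).mono' (aestronglyMeasurable_deriv φ _) hφ_le
  have hφ_rpow (s : ℝ) : ‖φ s‖ ^ (q / a) = ‖g s‖ ^ q := by
    rw [norm_of_nonneg (by positivity), ← rpow_mul (norm_nonneg _),
      mul_div_cancel₀ _ (zero_lt_one.trans ha).ne']
  have hφ_zero : Tendsto φ atTop (𝓝 0) :=
    tendsto_zero_of_hasDerivAt_of_integrableOn_norm_rpow_Ioi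
      (fun s hs ↦ hφ s (Ioi_subset_Ici_self hs)) hφ' (q := q / a) (by positivity)
      (by simpa only [hφ_rpow] using hgq)
  calc φ r = -∫ s in Ioi r, deriv φ s := by
        rw [integral_Ioi_of_hasDerivAt_of_tendsto' hφ hφ' hφ_zero, zero_sub, neg_neg]
    _ ≤ ‖∫ s in Ioi r, deriv φ s‖ := neg_le_abs _
    _ ≤ ∫ s in Ioi r, a * (‖g s‖ ^ (a - 1) * ‖deriv g s‖) :=
        norm_integral_le_of_norm_le (hderiv.const_mul a) hφ_le
    _ = a * ∫ s in Ioi r, ‖g s‖ ^ (a - 1) * ‖deriv g s‖ := integral_const_mul _ _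

end HalfLine

section RadialDerivative

open NormedSpace

variable {E F : Type*} [NormedAddCommGroup E] [NormedSpace ℝ E] [NormedAddCommGroup F]
  [NormedSpace ℝ F] {g : ℝ → F} {x : E}

theorem hasDerivAt_of_differentiableAt_comp_norm (hx : x ≠ 0)
    (hg : DifferentiableAt ℝ (fun y : E ↦ g ‖y‖) x) :
    HasDerivAt g (fderiv ℝ (fun y : E ↦ g ‖y‖) x (normalize x)) ‖x‖ := by
  have hray : HasDerivAt (fun s : ℝ ↦ s • normalize x) (normalize x) ‖x‖ := by
    simpa only [id_eq, one_smul] using (hasDerivAt_id ‖x‖).smul_const (normalize x)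
  have hcomp := hg.hasFDerivAt.comp_hasDerivAt_of_eq ‖x‖ hray (norm_smul_normalize x).symm
  refine hcomp.congr_of_eventuallyEq ?_
  filter_upwards [lt_mem_nhds (norm_pos_iff.2 hx)] with s hs
  rw [Function.comp_apply, norm_smul, norm_normalize hx, mul_one, norm_of_nonneg hs.le]

theorem norm_deriv_le_norm_fderiv_comp_norm (hx : x ≠ 0)
    (hg : DifferentiableAt ℝ (fun y : E ↦ g ‖y‖) x) :
    ‖deriv g ‖x‖‖ ≤ ‖fderiv ℝ (fun y : E ↦ g ‖y‖) x‖ := by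
  rw [(hasDerivAt_of_differentiableAt_comp_norm hx hg).deriv]
  simpa only [norm_normalize hx, mul_one] using
    (fderiv ℝ (fun y : E ↦ g ‖y‖) x).le_opNorm (normalize x)

end RadialDerivative

section Powers

variable {α F : Type*} [MeasurableSpace α] {μ : Measure α} [NormedAddCommGroup F]
  {f : α → F} {q : ℝ}

theorem aestronglyMeasurable_norm_rpow_of_norm_rpow (hq : q ≠ 0)
    (hf : AEStronglyMeasurable (fun x ↦ ‖f x‖ ^ q) μ) (b : ℝ) :
    AEStronglyMeasurable (fun x ↦ ‖f x‖ ^ b) μ := by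
  refine (hf.aemeasurable.pow_const (b / q)).aestronglyMeasurable.congr (.of_forall fun x ↦ ?_)
  simp only [← rpow_mul (norm_nonneg (f x)), mul_div_cancel₀ b hq]

theorem rpow_half_sq {t : ℝ} (ht : 0 ≤ t) (q : ℝ) : (t ^ (q / 2)) ^ 2 = t ^ q := by
  rw [← rpow_mul_natCast ht, Nat.cast_ofNat, div_mul_cancel₀ q two_ne_zero]

theorem memLp_two_norm_rpow_half (hq : q ≠ 0) (hf : Integrable (fun x ↦ ‖f x‖ ^ q) μ) :
    MemLp (fun x ↦ ‖f x‖ ^ (q / 2)) 2 μ := by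
  refine (memLp_two_iff_integrable_sq
    (aestronglyMeasurable_norm_rpow_of_norm_rpow hq hf.aestronglyMeasurable _)).2 ?_
  simpa only [rpow_half_sq (norm_nonneg _)] using hf

theorem integral_norm_rpow_half_mul_le (hq : q ≠ 0) (hf : Integrable (fun x ↦ ‖f x‖ ^ q) μ)
    {h : α → ℝ} (hh₀ : 0 ≤ h) (hh : MemLp h 2 μ) :
    ∫ x, ‖f x‖ ^ (q / 2) * h x ∂μ ≤
      (∫ x, h x ^ 2 ∂μ) ^ ((1 : ℝ) / 2) * (∫ x, ‖f x‖ ^ q ∂μ) ^ ((1 : ℝ) / 2) := by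
  have hholder := integral_mul_le_Lp_mul_Lq_of_nonneg (μ := μ) HolderConjugate.two_two
    (f := h) (g := fun x ↦ ‖f x‖ ^ (q / 2)) (.of_forall hh₀)
    (.of_forall fun x ↦ rpow_nonneg (norm_nonneg _) _)
    (by simpa only [ENNReal.ofReal_ofNat] using hh)
    (by simpa only [ENNReal.ofReal_ofNat] using memLp_two_norm_rpow_half hq hf)
  simpa only [mul_comm, rpow_two, rpow_half_sq (norm_nonneg _)] using hholder

end Powers

section PolarCoordinates

open Set Module

variable {E F : Type*} [NormedAddCommGroup E] [NormedSpace ℝ E] [FiniteDimensional ℝ E]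
  [Nontrivial E] [MeasurableSpace E] [BorelSpace E] {μ : Measure E} [μ.IsAddHaarMeasure]

theorem integrableOn_Ioi_of_integrable_comp_norm [NormedAddCommGroup F] [NormedSpace ℝ F]
    {f : ℝ → F} (hf : Integrable (fun x : E ↦ f ‖x‖) μ) {r : ℝ} (hr : 0 < r) :
    IntegrableOn f (Ioi r) := by
  have hweighted := ((integrable_fun_norm_addHaar μ).1 hf).mono_set (Ioi_subset_Ioi hr.le)
  have hinv : IntegrableOn (fun s ↦ (s ^ (finrank ℝ E - 1))⁻¹ • s ^ (finrank ℝ E - 1) • f s)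
      (Ioi r) := by
    refine hweighted.bdd_smul (C := (r ^ (finrank ℝ E - 1))⁻¹)
      (by fun_prop : Measurable _).aestronglyMeasurable ?_
    filter_upwards [ae_restrict_mem measurableSet_Ioi] with s (hs : r < s)
    have hs₀ : 0 < s := hr.trans hs
    rw [norm_of_nonneg (by positivity)]
    gcongr
  refine hinv.congr_fun (fun s hs ↦ ?_) measurableSet_Ioi
  exact inv_smul_smul₀ (pow_ne_zero _ (hr.trans hs).ne') (f s)

theorem toSphere_mul_pow_mul_integral_Ioi_le {f : ℝ → ℝ} (hf₀ : ∀ s, 0 < s → 0 ≤ f s)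
    (hf : Integrable (fun x : E ↦ f ‖x‖) μ) {r : ℝ} (hr : 0 < r) :
    μ.toSphere.real univ * r ^ (finrank ℝ E - 1) * ∫ s in Ioi r, f s ≤ ∫ x, f ‖x‖ ∂μ := by
  have hweighted := (integrable_fun_norm_addHaar μ).1 hf
  rw [integral_fun_norm_addHaar μ f, μ.toSphere_real_apply_univ, nsmul_eq_mul, smul_eq_mul,
    ← mul_assoc, mul_assoc _ (r ^ _), ← integral_const_mul]
  gcongr
  calc ∫ s in Ioi r, r ^ (finrank ℝ E - 1) * f s
      ≤ ∫ s in Ioi r, s ^ (finrank ℝ E - 1) • f s := by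
        refine setIntegral_mono_on ((integrableOn_Ioi_of_integrable_comp_norm hf hr).const_mul _)
          (hweighted.mono_set (Ioi_subset_Ioi hr.le)) measurableSet_Ioi fun s (hs : r < s) ↦ ?_
        exact mul_le_mul_of_nonneg_right (by gcongr) (hf₀ s (hr.trans hs))
    _ ≤ ∫ s in Ioi 0, s ^ (finrank ℝ E - 1) • f s := by
        refine setIntegral_mono_set hweighted ?_ (Ioi_subset_Ioi hr.le).eventuallyLE
        filter_upwards [ae_restrict_mem measurableSet_Ioi] with s hs
        exact mul_nonneg (pow_nonneg (le_of_lt hs) _) (hf₀ s hs)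

theorem toSphere_mul_pow_mul_norm_rpow_le_integral [NormedAddCommGroup F]
    [InnerProductSpace ℝ F] [CompleteSpace F] {u : E → F} {a q : ℝ}
    (hu : ∀ x ≠ 0, DifferentiableAt ℝ u x) (hrad : u.FactorsThrough norm) (ha : 1 < a)
    (hq : 0 < q) (hgrad : Integrable (fun y ↦ ‖u y‖ ^ (a - 1) * ‖fderiv ℝ u y‖) μ)
    (huq : Integrable (fun y ↦ ‖u y‖ ^ q) μ) {x : E} (hx : x ≠ 0) :
    μ.toSphere.real univ * ‖x‖ ^ (finrank ℝ E - 1) * ‖u x‖ ^ a ≤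
      a * ∫ y, ‖u y‖ ^ (a - 1) * ‖fderiv ℝ u y‖ ∂μ := by
  obtain ⟨g, rfl⟩ := (Function.factorsThrough_iff u).1 hrad
  have hg (s : ℝ) (hs : 0 < s) : DifferentiableAt ℝ g s := by
    obtain ⟨y, rfl⟩ := exists_norm_eq E hs.le
    have hy : y ≠ 0 := norm_pos_iff.1 hs
    exact (hasDerivAt_of_differentiableAt_comp_norm hy (hu y hy)).differentiableAt
  set f : ℝ → ℝ := fun s ↦ ‖g s‖ ^ (a - 1) * ‖deriv g s‖
  have hf₀ (s : ℝ) : 0 ≤ f s := by positivity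
  have hf_le : ∀ᵐ y ∂μ, f ‖y‖ ≤ ‖g ‖y‖‖ ^ (a - 1) * ‖fderiv ℝ (g ∘ norm) y‖ := by
    filter_upwards [μ.ae_ne 0] with y hy
    have := norm_deriv_le_norm_fderiv_comp_norm hy (hu y hy)
    exact mul_le_mul_of_nonneg_left this (by positivity)
  have hf_meas : AEStronglyMeasurable (fun y : E ↦ f ‖y‖) μ := by
    have hpow : AEStronglyMeasurable (fun y : E ↦ ‖g ‖y‖‖ ^ (a - 1)) μ :=
      aestronglyMeasurable_norm_rpow_of_norm_rpow hq.ne' huq.aestronglyMeasurable (a - 1)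
    have hderiv : StronglyMeasurable (fun y : E ↦ deriv g ‖y‖) :=
      (stronglyMeasurable_deriv g).comp_measurable measurable_norm
    exact hpow.mul hderiv.norm.aestronglyMeasurable
  have hf : Integrable (fun y : E ↦ f ‖y‖) μ :=
    hgrad.mono' hf_meas (hf_le.mono fun y hy ↦ by rwa [norm_of_nonneg (hf₀ _)])
  have hhalfLine : ‖g ‖x‖‖ ^ a ≤ a * ∫ s in Ioi ‖x‖, f s :=
    norm_rpow_le_integral_Ioi (fun s hs ↦ hg s ((norm_pos_iff.2 hx).trans_le hs)) ha hq
      (integrableOn_Ioi_of_integrable_comp_norm hf (norm_pos_iff.2 hx))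
      (integrableOn_Ioi_of_integrable_comp_norm huq (norm_pos_iff.2 hx))
  calc μ.toSphere.real univ * ‖x‖ ^ (finrank ℝ E - 1) * ‖g ‖x‖‖ ^ a
      ≤ μ.toSphere.real univ * ‖x‖ ^ (finrank ℝ E - 1) * (a * ∫ s in Ioi ‖x‖, f s) := by gcongr
    _ = a * (μ.toSphere.real univ * ‖x‖ ^ (finrank ℝ E - 1) * ∫ s in Ioi ‖x‖, f s) := by ring
    _ ≤ a * ∫ y, f ‖y‖ ∂μ := by
        gcongr
        exact toSphere_mul_pow_mul_integral_Ioi_le (fun s _ ↦ hf₀ s) hf (norm_pos_iff.2 hx)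
    _ ≤ a * ∫ y, ‖g ‖y‖‖ ^ (a - 1) * ‖fderiv ℝ (g ∘ norm) y‖ ∂μ :=
        mul_le_mul_of_nonneg_left (integral_mono_ae hf hgrad hf_le) (by positivity)

theorem toSphere_mul_pow_mul_norm_rpow_le_mul_rpow_integral [NormedAddCommGroup F]
    [InnerProductSpace ℝ F] [CompleteSpace F] {u : E → F} {p : ℝ} (hp : -1 < p)
    (hu : ∀ x ≠ 0, DifferentiableAt ℝ u x) (hrad : u.FactorsThrough norm)
    (hgrad : Integrable (fun y ↦ ‖fderiv ℝ u y‖ ^ 2) μ)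
    (hup : Integrable (fun y ↦ ‖u y‖ ^ (p + 1)) μ) {x : E} (hx : x ≠ 0) :
    μ.toSphere.real univ * ‖x‖ ^ (finrank ℝ E - 1) * ‖u x‖ ^ ((p + 3) / 2) ≤
      (p + 3) / 2 * ((∫ y, ‖fderiv ℝ u y‖ ^ 2 ∂μ) ^ ((1 : ℝ) / 2) *
        (∫ y, ‖u y‖ ^ (p + 1) ∂μ) ^ ((1 : ℝ) / 2)) := by
  have hp₁ : 0 < p + 1 := by linarith
  have hexp : (p + 3) / 2 - 1 = (p + 1) / 2 := by ring
  have hgrad_memLp : MemLp (fun y ↦ ‖fderiv ℝ u y‖) 2 μ :=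
    (memLp_two_iff_integrable_sq (measurable_fderiv ℝ u).norm.aestronglyMeasurable).2 hgrad
  have hprod : Integrable (fun y ↦ ‖u y‖ ^ ((p + 3) / 2 - 1) * ‖fderiv ℝ u y‖) μ := by
    rw [hexp]
    exact (memLp_two_norm_rpow_half hp₁.ne' hup).integrable_mul hgrad_memLp
  calc μ.toSphere.real univ * ‖x‖ ^ (finrank ℝ E - 1) * ‖u x‖ ^ ((p + 3) / 2)
      ≤ (p + 3) / 2 * ∫ y, ‖u y‖ ^ ((p + 3) / 2 - 1) * ‖fderiv ℝ u y‖ ∂μ :=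
        toSphere_mul_pow_mul_norm_rpow_le_integral hu hrad (by linarith) hp₁ hprod hup hx
    _ ≤ _ := by
        rw [hexp]
        gcongr
        · linarith
        · exact integral_norm_rpow_half_mul_le hp₁.ne' hup (fun y ↦ norm_nonneg _) hgrad_memLp

end PolarCoordinates

section RootExtraction

variable {a : ℝ}

theorem rpow_inv_self_le_two (ha : 1 ≤ a) : a ^ a⁻¹ ≤ 2 := by
  have ha₀ : 0 < a := zero_lt_one.trans_le ha
  have bernoulli : 1 + a * 1 ≤ (1 + 1) ^ a := one_add_mul_self_le_rpow_one_add (by norm_num) ha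
  rw [rpow_inv_le_iff_of_pos ha₀.le zero_le_two ha₀, ← one_add_one_eq_two]
  linarith

theorem rpow_inv_le_max_one {t : ℝ} (ht : 0 ≤ t) (ha : 1 ≤ a) : t ^ a⁻¹ ≤ max 1 t :=
  calc t ^ a⁻¹ ≤ max 1 t ^ a⁻¹ := by gcongr; exact le_max_right 1 t
    _ ≤ max 1 t := rpow_le_self_of_one_le (le_max_left 1 t) (inv_le_one_of_one_le₀ ha)

theorem le_of_mul_rpow_le_mul {ω t m v : ℝ} (ha : 1 ≤ a) (hω : 0 < ω) (ht : 0 < t) (hm : 0 ≤ m)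
    (hv : 0 ≤ v) (h : ω * t * v ^ a ≤ a * m) :
    v ≤ 2 * max 1 ω⁻¹ * t ^ (-a⁻¹) * m ^ a⁻¹ := by
  have ha₀ : 0 < a := zero_lt_one.trans_le ha
  calc v = (v ^ a) ^ a⁻¹ := (rpow_rpow_inv hv ha₀.ne').symm
    _ ≤ (a * ω⁻¹ * t⁻¹ * m) ^ a⁻¹ := by
        gcongr
        rw [← le_div_iff₀' (by positivity)] at h
        exact h.trans_eq (by field_simp)
    _ = a ^ a⁻¹ * ω⁻¹ ^ a⁻¹ * t ^ (-a⁻¹) * m ^ a⁻¹ := by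
        rw [mul_rpow (by positivity) hm, mul_rpow (by positivity) (by positivity),
          mul_rpow (by positivity) (by positivity), rpow_neg ht.le, inv_rpow ht.le]
    _ ≤ 2 * max 1 ω⁻¹ * t ^ (-a⁻¹) * m ^ a⁻¹ := by
        gcongr
        · exact rpow_inv_self_le_two ha
        · exact rpow_inv_le_max_one (by positivity) ha

end RootExtraction

open Module in
theorem pointwise_estimate_radial_H1_Lp_general {E F : Type*} [NormedAddCommGroup E]
    [NormedSpace ℝ E] [FiniteDimensional ℝ E] [Nontrivial E] [MeasurableSpace E] [BorelSpace E]
    (μ : Measure E) [μ.IsAddHaarMeasure] [NormedAddCommGroup F] [InnerProductSpace ℝ F]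
    [CompleteSpace F] :
    ∃ C : ℝ, 0 < C ∧ ∀ p : ℝ, -1 < p → ∀ u : E → F,
      (∀ x ≠ 0, DifferentiableAt ℝ u x) → u.FactorsThrough norm →
      Integrable (fun y ↦ ‖fderiv ℝ u y‖ ^ 2) μ → Integrable (fun y ↦ ‖u y‖ ^ (p + 1)) μ →
      ∀ x ≠ 0, ‖u x‖ ≤ C * ‖x‖ ^ (-(2 * ((finrank ℝ E : ℝ) - 1) / (p + 3))) *
        ((∫ y, ‖fderiv ℝ u y‖ ^ 2 ∂μ) ^ ((1 : ℝ) / 2)) ^ (2 / (p + 3)) *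
        ((∫ y, ‖u y‖ ^ (p + 1) ∂μ) ^ (1 / (p + 1))) ^ ((p + 1) / (p + 3)) := by
  have hω : 0 < μ.toSphere.real Set.univ := by
    have : NeZero μ.toSphere := ⟨μ.toSphere_ne_zero⟩
    exact measureReal_univ_pos
  refine ⟨2 * max 1 (μ.toSphere.real Set.univ)⁻¹, by positivity, ?_⟩
  intro p hp u hu hrad hgrad hup x hx
  have hr : 0 < ‖x‖ := norm_pos_iff.2 hx
  have hroot := le_of_mul_rpow_le_mul (by linarith) hω (by positivity) (by positivity)
    (norm_nonneg (u x))
    (toSphere_mul_pow_mul_norm_rpow_le_mul_rpow_integral hp hu hrad hgrad hup hx)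
  have hr_exp : (‖x‖ ^ (finrank ℝ E - 1)) ^ (-((p + 3) / 2)⁻¹) =
      ‖x‖ ^ (-(2 * ((finrank ℝ E : ℝ) - 1) / (p + 3))) := by
    rw [← rpow_natCast_mul hr.le, Nat.cast_pred finrank_pos, inv_div]
    ring_nf
  have hu_exp (t : ℝ) (ht : 0 ≤ t) : (t ^ ((1 : ℝ) / 2)) ^ (2 / (p + 3)) =
      (t ^ (1 / (p + 1))) ^ ((p + 1) / (p + 3)) := by
    have hp₁ : p + 1 ≠ 0 := by linarith
    rw [← rpow_mul ht, ← rpow_mul ht]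
    congr 1
    field_simp
  rwa [hr_exp, mul_rpow (by positivity) (by positivity), inv_div, ← mul_assoc,
    hu_exp (∫ y, ‖u y‖ ^ (p + 1) ∂μ) (by positivity)] at hroot

/-- Pointwise estimate for radial `Ḣ¹ ∩ L^{p+1}(ℝ^d)` functions, `d ≥ 3`, `p > 1`:
`|u(r)| ≤ C(d) r^{-2(d-1)/(p+3)} ‖u‖_{Ḣ¹}^{2/(p+3)} ‖u‖_{L^{p+1}}^{(p+1)/(p+3)}`. -/
theorem pointwise_estimate_radial_H1_Lp (d : ℕ) (hd : 3 ≤ d) :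
    ∃ C : ℝ, 0 < C ∧
      ∀ (p : ℝ), 1 < p →
      ∀ (u : EuclideanSpace ℝ (Fin d) → ℝ),
        Differentiable ℝ u →
        (∀ x y : EuclideanSpace ℝ (Fin d), ‖x‖ = ‖y‖ → u x = u y) →
        Integrable (fun x => ‖fderiv ℝ u x‖ ^ 2) →
        Integrable (fun x => |u x| ^ (p + 1)) →
        ∀ r : ℝ, 0 < r → ∀ x : EuclideanSpace ℝ (Fin d), ‖x‖ = r →
          |u x| ≤ C * r ^ (-(2 * ((d : ℝ) - 1) / (p + 3))) *
            ((∫ y, ‖fderiv ℝ u y‖ ^ 2) ^ ((1 : ℝ) / 2)) ^ (2 / (p + 3)) *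
            ((∫ y, |u y| ^ (p + 1)) ^ (1 / (p + 1))) ^ ((p + 1) / (p + 3)) := by
  have : NeZero d := ⟨by lia⟩
  obtain ⟨C, hC, hbound⟩ := pointwise_estimate_radial_H1_Lp_general (F := ℝ)
    (volume : Measure (EuclideanSpace ℝ (Fin d)))
  refine ⟨C, hC, fun p hp u hu hrad hgrad hup r hr x hx ↦ ?_⟩
  subst hx
  simpa only [finrank_euclideanSpace_fin, norm_eq_abs] using
    hbound p (by linarith) u (fun y _ ↦ hu y) (fun y z ↦ hrad y z) hgrad hup x (norm_pos_iff.1 hr)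
end

section
/- Let d ≥ 3 and let u be a finite-energy solution of the free wave equation ∂_t²u - Δu = 0 on ℝ^d with initial data in Ḣ¹ × L²(ℝ^d). Then lim_{t→+∞} ∫_{ℝ^d} |u(x,t)|²/|x|² dx = 0. -/
open MeasureTheory Real Filter

/-!
Write `⟨x⟩ = (1 + |x|²)^(1/2)`. For a suitable radial function `q`, the integral of
`∂ₜu (⟨x⟩⁻¹ x·∇u + q u)` is bounded, by Hardy's inequality, and decreases in time at a rate bounded
below by a multiple of the local energy (Morawetz). Hence the local energy is integrable in time
and, varying slowly, tends to `0`.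

Consider the average of `u` with a translate of itself by a large time. The energy of the
translate has left every fixed ball, so the two waves hardly interact and the average has about half
the energy of `u`, while it stays at bounded distance from `u` in `L²`, uniformly in time. By
iteration, `u = v + w` where `v` has as little energy as we please, hence a small Hardy norm, and
`w` is bounded in `L²` with decaying local energy. The Hardy norm of `w` is small far from the
origin by the `L²` bound and small near the origin by Hardy's inequality applied to a localization
of `w`.
-/

namespace FreeWave

open scoped Gradient Laplacian RealInnerProductSpace

theorem integrable_and_integral_le_of_tendsto {α ι : Type*} [MeasurableSpace α] {μ : Measure α}
    {l : Filter ι} [l.NeBot] [l.IsCountablyGenerated] {f : α → ℝ} {F : ι → α → ℝ} {B : ℝ}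
    (hFm : ∀ i, AEStronglyMeasurable (F i) μ) (hF₀ : ∀ i x, 0 ≤ F i x)
    (hF : ∀ᶠ i in l, Integrable (F i) μ ∧ ∫ x, F i x ∂μ ≤ B)
    (hlim : ∀ᵐ x ∂μ, Tendsto (fun i => F i x) l (nhds (f x))) :
    Integrable f μ ∧ ∫ x, f x ∂μ ≤ B := by
  have hfm : AEStronglyMeasurable f μ := aestronglyMeasurable_of_tendsto_ae l hFm hlim
  have hf₀ : 0 ≤ᵐ[μ] f := by
    filter_upwards [hlim] with x hx using ge_of_tendsto' hx fun i => hF₀ i x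
  have hB₀ : 0 ≤ B := by
    obtain ⟨i, -, hi⟩ := hF.exists
    exact (integral_nonneg (hF₀ i)).trans hi
  have hle : ∫⁻ x, ENNReal.ofReal (f x) ∂μ ≤ ENNReal.ofReal B := by
    calc ∫⁻ x, ENNReal.ofReal (f x) ∂μ
        = ∫⁻ x, liminf (fun i => ENNReal.ofReal (F i x)) l ∂μ := by
          refine lintegral_congr_ae ?_
          filter_upwards [hlim] with x hx using (ENNReal.tendsto_ofReal hx).liminf_eq.symm
      _ ≤ liminf (fun i => ∫⁻ x, ENNReal.ofReal (F i x) ∂μ) l :=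
          lintegral_liminf_le' fun i => (hFm i).aemeasurable.ennreal_ofReal
      _ ≤ ENNReal.ofReal B := by
          refine liminf_le_of_frequently_le' (hF.mono fun i hi => ?_).frequently
          rw [← ofReal_integral_eq_lintegral_ofReal hi.1 (Eventually.of_forall (hF₀ i))]
          exact ENNReal.ofReal_le_ofReal hi.2
  refine ⟨⟨hfm, ?_⟩, ?_⟩
  · rw [hasFiniteIntegral_iff_ofReal hf₀]
    exact hle.trans_lt ENNReal.ofReal_lt_top
  · rw [integral_eq_lintegral_of_nonneg_ae hf₀ hfm]
    exact ENNReal.toReal_le_of_le_ofReal hB₀ hle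

/-! ### Gradients -/

section Gradient

variable {E : Type*} [NormedAddCommGroup E] [InnerProductSpace ℝ E] [CompleteSpace E]
  {f g : E → ℝ} {f' g' x : E}

theorem hasGradientAt_add (hf : HasGradientAt f f' x) (hg : HasGradientAt g g' x) :
    HasGradientAt (fun y => f y + g y) (f' + g') x := by
  simpa [hasGradientAt_iff_hasFDerivAt] using hf.hasFDerivAt.fun_add hg.hasFDerivAt

theorem hasGradientAt_mul (hf : HasGradientAt f f' x) (hg : HasGradientAt g g' x) :
    HasGradientAt (fun y => f y * g y) (f x • g' + g x • f') x := by
  simpa [hasGradientAt_iff_hasFDerivAt] using hf.hasFDerivAt.fun_mul hg.hasFDerivAt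

theorem hasGradientAt_comp {φ : ℝ → ℝ} {φ' : ℝ} (hφ : HasDerivAt φ φ' (f x))
    (hf : HasGradientAt f f' x) : HasGradientAt (fun y => φ (f y)) (φ' • f') x := by
  simpa [hasGradientAt_iff_hasFDerivAt, Function.comp_def] using
    hφ.comp_hasFDerivAt x hf.hasFDerivAt

theorem hasGradientAt_const_mul (c : ℝ) (hf : HasGradientAt f f' x) :
    HasGradientAt (fun y => c * f y) (c • f') x := by
  simpa using hasGradientAt_comp ((hasDerivAt_id (f x)).const_mul c) hf

theorem hasGradientAt_pow (n : ℕ) (hf : HasGradientAt f f' x) :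
    HasGradientAt (fun y => f y ^ n) ((n * f x ^ (n - 1)) • f') x :=
  hasGradientAt_comp (hasDerivAt_pow n (f x)) hf

theorem hasGradientAt_norm_sq (x : E) : HasGradientAt (fun y => ‖y‖ ^ 2) ((2 : ℝ) • x) x := by
  rw [hasGradientAt_iff_hasFDerivAt]
  refine (hasStrictFDerivAt_norm_sq x).hasFDerivAt.congr_fderiv ?_
  ext v
  simp [two_smul]

theorem contDiff_gradient {n : WithTop ℕ∞} (hf : ContDiff ℝ (n + 1) f) : ContDiff ℝ n (∇ f) :=
  (InnerProductSpace.toDual ℝ E).symm.contDiff.comp (hf.fderiv_right le_rfl)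

theorem inner_fderiv_gradient (hf : ContDiff ℝ 2 f) (x v w : E) :
    ⟪fderiv ℝ (∇ f) x v, w⟫ = fderiv ℝ (fderiv ℝ f) x v w := by
  have hdiff : DifferentiableAt ℝ (fderiv ℝ f) x :=
    (hf.fderiv_right (m := 1) le_rfl).differentiable one_ne_zero x
  have hcomp : fderiv ℝ (∇ f) x
      = (InnerProductSpace.toDual ℝ E).symm.toContinuousLinearEquiv.toContinuousLinearMap ∘L
        fderiv ℝ (fderiv ℝ f) x :=
    ((InnerProductSpace.toDual ℝ E).symm.toContinuousLinearEquiv.toContinuousLinearMap.hasFDerivAt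
      |>.comp x hdiff.hasFDerivAt).fderiv
  simp [hcomp]

theorem inner_fderiv_gradient_comm (hf : ContDiff ℝ 2 f) (x v w : E) :
    ⟪fderiv ℝ (∇ f) x v, w⟫ = ⟪v, fderiv ℝ (∇ f) x w⟫ := by
  rw [real_inner_comm (fderiv ℝ (∇ f) x w), inner_fderiv_gradient hf, inner_fderiv_gradient hf]
  exact hf.contDiffAt.isSymmSndFDerivAt (by simp) v w

end Gradient

/-! ### Divergence -/

section Divergence

variable {E : Type*} [NormedAddCommGroup E] [InnerProductSpace ℝ E] {F G : E → E} {x : E}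

/-- The divergence of a vector field, as the trace of its derivative; it takes the junk value `0`
where the field is not differentiable. -/
noncomputable def divergence (F : E → E) (x : E) : ℝ := LinearMap.trace ℝ E (fderiv ℝ F x)

theorem divergence_add (hF : DifferentiableAt ℝ F x) (hG : DifferentiableAt ℝ G x) :
    divergence (fun y => F y + G y) x = divergence F x + divergence G x := by
  simp [divergence, fderiv_fun_add hF hG]

variable [FiniteDimensional ℝ E]

theorem divergence_id (x : E) : divergence (fun y => y) x = Module.finrank ℝ E := by
  simp [divergence]

theorem divergence_smul {a : E → ℝ} {a' : E} (ha : HasGradientAt a a' x)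
    (hF : DifferentiableAt ℝ F x) :
    divergence (fun y => a y • F y) x = a x * divergence F x + ⟪a', F x⟫ := by
  rw [divergence, (ha.hasFDerivAt.fun_smul hF.hasFDerivAt).fderiv,
    LinearMap.trace_eq_sum_inner _ (stdOrthonormalBasis ℝ E),
    divergence, LinearMap.trace_eq_sum_inner _ (stdOrthonormalBasis ℝ E),
    ← (stdOrthonormalBasis ℝ E).sum_inner_mul_inner a', Finset.mul_sum, ← Finset.sum_add_distrib]
  simp [inner_add_right, inner_smul_right]

theorem divergence_gradient {f : E → ℝ} (hf : ContDiff ℝ 2 f) (x : E) :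
    divergence (∇ f) x = Δ f x := by
  rw [divergence, LinearMap.trace_eq_sum_inner _ (stdOrthonormalBasis ℝ E),
    InnerProductSpace.laplacian_eq_iteratedFDeriv_stdOrthonormalBasis]
  refine Finset.sum_congr rfl fun i _ => ?_
  rw [real_inner_comm, ContinuousLinearMap.coe_coe, inner_fderiv_gradient hf]
  simp [iteratedFDeriv_two_apply]

theorem continuous_divergence (hF : ContDiff ℝ 1 F) : Continuous (divergence F) :=
  ((LinearMap.trace ℝ E).comp (ContinuousLinearMap.coeLM ℝ)).continuous_of_finiteDimensional.comp
    (hF.continuous_fderiv one_ne_zero)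

variable [MeasurableSpace E] [BorelSpace E]

theorem integral_mul_divergence {φ : E → ℝ} (hφ : ContDiff ℝ 1 φ) (hφs : HasCompactSupport φ)
    (hF : ContDiff ℝ 1 F) :
    ∫ x, φ x * divergence F x = -∫ x, ⟪∇ φ x, F x⟫ := by
  let b := stdOrthonormalBasis ℝ E
  have hφc := hφ.continuous
  have hφ'c : Continuous (∇ φ) := (contDiff_gradient (n := 0) hφ).continuous
  have hFc := hF.continuous
  have := hF.continuous_fderiv one_ne_zero
  have hφ's : HasCompactSupport (∇ φ) :=
    (hφs.fderiv ℝ).comp_left (map_zero (InnerProductSpace.toDual ℝ E).symm)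
  have hint_grad : ∀ i, Integrable fun x => ⟪∇ φ x, b i⟫ * ⟪b i, F x⟫ := fun i =>
    (by fun_prop : Continuous fun x => ⟪∇ φ x, b i⟫ * ⟪b i, F x⟫).integrable_of_hasCompactSupport
      (hφ's.mono' <| by
        refine Function.support_subset_iff'.2 fun x hx => ?_
        simp [image_eq_zero_of_notMem_tsupport hx])
  have hint : ∀ {g : E → ℝ}, Continuous g → Integrable fun x => φ x * g x := fun hg =>
    (hφc.mul hg).integrable_of_hasCompactSupport hφs.mul_right
  have hline : ∀ i, ∫ x, φ x * ⟪b i, fderiv ℝ F x (b i)⟫ = -∫ x, ⟪∇ φ x, b i⟫ * ⟪b i, F x⟫ := by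
    intro i
    refine integral_bilinear_hasLineDerivAt_right_eq_neg_left_of_integrable
      (B := ContinuousLinearMap.mul ℝ ℝ) (v := b i) (hint_grad i) (hint (by fun_prop))
      (hint (by fun_prop)) (fun x _ => ?_) (fun x _ => ?_)
    · simpa [← inner_gradient_left] using
        (hφ.differentiable one_ne_zero x).hasFDerivAt.hasLineDerivAt (b i)
    · simpa [Function.comp_def] using ((innerSL ℝ (b i)).hasFDerivAt.comp x
        (hF.differentiable one_ne_zero x).hasFDerivAt).hasLineDerivAt (b i)
  calc ∫ x, φ x * divergence F x
      = ∑ i, ∫ x, φ x * ⟪b i, fderiv ℝ F x (b i)⟫ := by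
        rw [← integral_finsetSum _ fun i _ => hint (by fun_prop)]
        simp [divergence, LinearMap.trace_eq_sum_inner _ b, Finset.mul_sum]
    _ = -∫ x, ⟪∇ φ x, F x⟫ := by
        simp_rw [hline, Finset.sum_neg_distrib, ← integral_finsetSum _ fun i _ => hint_grad i,
          b.sum_inner_mul_inner]

end Divergence

/-! ### Functions of space and time -/

section SpaceTime

variable {E : Type*} [NormedAddCommGroup E] [InnerProductSpace ℝ E] {u : E → ℝ → ℝ}
  {n : WithTop ℕ∞}

theorem contDiff_uncurry_deriv (hu : ContDiff ℝ (n + 1) (Function.uncurry u)) :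
    ContDiff ℝ n (Function.uncurry fun x t => deriv (u x) t) := by
  have hfderiv : ContDiff ℝ n fun p : E × ℝ => fderiv ℝ (fun s => u p.1 s) p.2 :=
    ContDiff.fderiv (hu.comp (by fun_prop : ContDiff ℝ (n + 1) fun q : (E × ℝ) × ℝ => (q.1.1, q.2)))
      contDiff_snd le_rfl
  exact hfderiv.clm_apply contDiff_const

theorem contDiff_uncurry_gradient [CompleteSpace E]
    (hu : ContDiff ℝ (n + 1) (Function.uncurry u)) :
    ContDiff ℝ n (Function.uncurry fun x t => ∇ (fun y => u y t) x) := by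
  have hfderiv : ContDiff ℝ n fun p : E × ℝ => fderiv ℝ (fun y => u y p.2) p.1 :=
    ContDiff.fderiv (hu.comp (by fun_prop : ContDiff ℝ (n + 1) fun q : (E × ℝ) × E => (q.2, q.1.2)))
      contDiff_fst le_rfl
  exact (InnerProductSpace.toDual ℝ E).symm.contDiff.comp hfderiv

theorem deriv_eq_fderiv_uncurry {x : E} {t : ℝ}
    (hu : DifferentiableAt ℝ (Function.uncurry u) (x, t)) :
    deriv (u x) t = fderiv ℝ (Function.uncurry u) (x, t) (0, 1) :=
  (hu.hasFDerivAt.comp_hasDerivAt t ((hasDerivAt_const t x).prodMk (hasDerivAt_id' t))).deriv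

theorem inner_gradient_eq_fderiv_uncurry [CompleteSpace E] {x : E} {t : ℝ}
    (hu : DifferentiableAt ℝ (Function.uncurry u) (x, t)) (v : E) :
    ⟪∇ (fun y => u y t) x, v⟫ = fderiv ℝ (Function.uncurry u) (x, t) (v, 0) := by
  have hspace : HasFDerivAt (fun y => u y t)
      (fderiv ℝ (Function.uncurry u) (x, t) ∘L ContinuousLinearMap.inl ℝ E ℝ) x :=
    hu.hasFDerivAt.comp (f := fun y => (y, t)) x (hasFDerivAt_prodMk_left x t)
  simp [hspace.fderiv]

theorem deriv_gradient_eq_gradient_deriv [CompleteSpace E]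
    (hu : ContDiff ℝ 2 (Function.uncurry u)) (x : E) (t : ℝ) :
    deriv (fun s => ∇ (fun y => u y s) x) t = ∇ (fun y => deriv (u y) t) x := by
  have hdiff : Differentiable ℝ (Function.uncurry u) := hu.differentiable two_ne_zero
  have hdiff' : DifferentiableAt ℝ (fderiv ℝ (Function.uncurry u)) (x, t) :=
    (hu.fderiv_right (m := 1) le_rfl).differentiable one_ne_zero _
  have hgrad : DifferentiableAt ℝ (fun s => ∇ (fun y => u y s) x) t :=
    ((contDiff_uncurry_gradient (n := 1) hu).comp (contDiff_prodMk_right x)).differentiable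
      one_ne_zero t
  have htime : HasDerivAt (fun s => fderiv ℝ (Function.uncurry u) (x, s))
      (fderiv ℝ (fderiv ℝ (Function.uncurry u)) (x, t) (0, 1)) t :=
    HasFDerivAt.comp_hasDerivAt (l := fderiv ℝ (Function.uncurry u)) t hdiff'.hasFDerivAt
      ((hasDerivAt_const t x).prodMk (hasDerivAt_id' t))
  have hspace : HasFDerivAt (fun y => fderiv ℝ (Function.uncurry u) (y, t))
      (fderiv ℝ (fderiv ℝ (Function.uncurry u)) (x, t) ∘L ContinuousLinearMap.inl ℝ E ℝ) x :=
    HasFDerivAt.comp (g := fderiv ℝ (Function.uncurry u)) x hdiff'.hasFDerivAt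
      (hasFDerivAt_prodMk_left (𝕜 := ℝ) x t)
  refine ext_inner_right ℝ fun v => ?_
  calc ⟪deriv (fun s => ∇ (fun y => u y s) x) t, v⟫
      = deriv (fun s => fderiv ℝ (Function.uncurry u) (x, s) (v, 0)) t := by
        rw [← funext fun s => inner_gradient_eq_fderiv_uncurry (hdiff (x, s)) v]
        simpa using (hgrad.hasDerivAt.inner ℝ (hasDerivAt_const t v)).deriv.symm
    _ = fderiv ℝ (fderiv ℝ (Function.uncurry u)) (x, t) (0, 1) (v, 0) := by
        simpa using (htime.clm_apply (hasDerivAt_const t (v, (0 : ℝ)))).deriv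
    _ = fderiv ℝ (fderiv ℝ (Function.uncurry u)) (x, t) (v, 0) (0, 1) :=
        hu.contDiffAt.isSymmSndFDerivAt (by simp) _ _
    _ = fderiv ℝ (fun y => fderiv ℝ (Function.uncurry u) (y, t) (0, 1)) x v := by
        simp [(hspace.clm_apply (hasFDerivAt_const ((0 : E), (1 : ℝ)) x)).fderiv]
    _ = ⟪∇ (fun y => deriv (u y) t) x, v⟫ := by
        rw [inner_gradient_left, funext fun y => deriv_eq_fderiv_uncurry (hdiff (y, t))]

end SpaceTime

/-! ### The weight `(1 + |x|²)^(-1/2)` -/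

section Weight

variable {E : Type*} [NormedAddCommGroup E]

/-- The weight `⟨x⟩⁻¹ = (1 + |x|²)^(-1/2)`, whose powers are the coefficients of the Morawetz
multiplier. -/
noncomputable def weight (x : E) : ℝ := (√(1 + ‖x‖ ^ 2))⁻¹

theorem weight_pos (x : E) : 0 < weight x := by
  unfold weight; positivity

theorem weight_sq (x : E) : weight x ^ 2 = (1 + ‖x‖ ^ 2)⁻¹ := by
  rw [weight, inv_pow, Real.sq_sqrt (by positivity)]

theorem weight_sq_mul_one_add_norm_sq (x : E) : weight x ^ 2 * (1 + ‖x‖ ^ 2) = 1 := by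
  rw [weight_sq]
  exact inv_mul_cancel₀ (by positivity)

theorem norm_sq_mul_weight_pow_add_two (x : E) (k : ℕ) :
    ‖x‖ ^ 2 * weight x ^ (k + 2) = weight x ^ k - weight x ^ (k + 2) := by
  linear_combination weight x ^ k * weight_sq_mul_one_add_norm_sq x

theorem weight_le_one (x : E) : weight x ≤ 1 :=
  inv_le_one_of_one_le₀ (Real.one_le_sqrt.2 (by linarith [sq_nonneg ‖x‖]))

theorem weight_mul_norm_le_one (x : E) : weight x * ‖x‖ ≤ 1 := by
  rw [← sq_le_one_iff₀ (by have := weight_pos x; positivity)]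
  nlinarith [weight_sq_mul_one_add_norm_sq x, sq_nonneg (weight x)]

theorem weight_sq_mul_le_div_norm_sq {x : E} (hx : x ≠ 0) (a : ℝ) :
    weight x ^ 2 * a ^ 2 ≤ a ^ 2 / ‖x‖ ^ 2 := by
  rw [weight_sq, div_eq_inv_mul]
  have := norm_pos_iff.2 hx
  gcongr
  linarith

end Weight

section WeightCalculus

variable {E : Type*} [NormedAddCommGroup E] [InnerProductSpace ℝ E]

@[fun_prop]
theorem contDiff_weight {n : WithTop ℕ∞} : ContDiff ℝ n (weight : E → ℝ) := by
  have hsqrt : ContDiff ℝ n fun x : E => √(1 + ‖x‖ ^ 2) :=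
    (contDiff_const.add (contDiff_norm_sq ℝ)).sqrt fun x => by positivity
  exact hsqrt.inv fun x => by positivity

@[fun_prop]
theorem continuous_weight : Continuous (weight : E → ℝ) := contDiff_weight (n := 0).continuous

variable [CompleteSpace E]

theorem hasGradientAt_weight (x : E) : HasGradientAt weight (-weight x ^ 3 • x) x := by
  have hderiv : HasDerivAt (fun r : ℝ => (√(1 + r))⁻¹) (-weight x ^ 3 / 2) (‖x‖ ^ 2) := by
    have hpos : 0 < 1 + ‖x‖ ^ 2 := by positivity
    refine ((((hasDerivAt_id' (‖x‖ ^ 2)).const_add 1).sqrt hpos.ne').fun_inv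
      (Real.sqrt_ne_zero'.2 hpos)).congr_deriv ?_
    rw [weight]
    field_simp
  have hcomp : HasGradientAt weight ((-weight x ^ 3 / 2) • (2 : ℝ) • x) x :=
    hasGradientAt_comp (f := fun y => ‖y‖ ^ 2) hderiv (hasGradientAt_norm_sq x)
  rwa [smul_smul, div_mul_cancel₀ _ two_ne_zero] at hcomp

theorem hasGradientAt_weight_pow (n : ℕ) (x : E) :
    HasGradientAt (fun y => weight y ^ n) (-(n * weight x ^ (n + 2)) • x) x := by
  convert hasGradientAt_pow n (hasGradientAt_weight x) using 1
  rw [smul_smul]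
  congr 1
  rcases n with _ | n
  · simp
  · rw [Nat.add_sub_cancel]
    ring

end WeightCalculus

/-! ### A radial cutoff -/

theorem hasDerivAt_max_zero_sq (y : ℝ) :
    HasDerivAt (fun z : ℝ => (max 0 z) ^ 2) (2 * max 0 y) y := by
  rcases lt_trichotomy y 0 with hy | rfl | hy
  · rw [max_eq_left hy.le, mul_zero]
    refine (hasDerivAt_const y (0 : ℝ)).congr_of_eventuallyEq ?_
    filter_upwards [eventually_lt_nhds hy] with z hz
    simp [max_eq_left hz.le]
  · have hsq : (fun z : ℝ => (max 0 z) ^ 2) =O[nhds 0] fun z : ℝ => z ^ 2 := by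
      refine Asymptotics.isBigO_of_le _ fun z => ?_
      rw [norm_pow, norm_pow, Real.norm_of_nonneg (le_max_left 0 z)]
      exact pow_le_pow_left₀ (le_max_left 0 z) (max_le (norm_nonneg z) (le_abs_self z)) 2
    rw [hasDerivAt_iff_isLittleO]
    simpa using hsq.trans_isLittleO (Asymptotics.isLittleO_pow_id one_lt_two)
  · rw [max_eq_right hy.le]
    have hpow : HasDerivAt (fun z : ℝ => z ^ 2) (2 * y) y := by simpa using hasDerivAt_pow 2 y
    refine hpow.congr_of_eventuallyEq ?_
    filter_upwards [eventually_gt_nhds hy] with z hz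
    simp [max_eq_right hz.le]

theorem contDiff_max_zero_sq : ContDiff ℝ 1 fun z : ℝ => (max 0 z) ^ 2 := by
  rw [contDiff_one_iff_deriv]
  refine ⟨fun y => (hasDerivAt_max_zero_sq y).differentiableAt, ?_⟩
  rw [funext fun y => (hasDerivAt_max_zero_sq y).deriv]
  fun_prop

section Cutoff

variable {E : Type*} [NormedAddCommGroup E] {R : ℝ} {x : E}

/-- The `C¹` cutoff `max(0, 1 - |x|²/R²)²` to the ball of radius `R`. -/
noncomputable def cutoff (R : ℝ) (x : E) : ℝ := (max 0 (1 - ‖x‖ ^ 2 / R ^ 2)) ^ 2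

theorem cutoff_nonneg (R : ℝ) (x : E) : 0 ≤ cutoff R x := sq_nonneg _

theorem cutoff_le_one (R : ℝ) (x : E) : cutoff R x ≤ 1 :=
  pow_le_one₀ (le_max_left _ _)
    (max_le zero_le_one (sub_le_self 1 (div_nonneg (sq_nonneg _) (sq_nonneg _))))

theorem max_zero_one_sub_norm_sq_div_eq_zero (hR : 0 < R) (hx : R ≤ ‖x‖) :
    max 0 (1 - ‖x‖ ^ 2 / R ^ 2) = 0 := by
  have : 1 ≤ ‖x‖ ^ 2 / R ^ 2 := (one_le_div (by positivity)).2 (pow_le_pow_left₀ hR.le hx 2)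
  exact max_eq_left (by linarith)

theorem cutoff_eq_zero (hR : 0 < R) (hx : R ≤ ‖x‖) : cutoff R x = 0 := by
  simp [cutoff, max_zero_one_sub_norm_sq_div_eq_zero hR hx]

theorem tendsto_cutoff (x : E) : Tendsto (fun R : ℝ => cutoff R x) atTop (nhds 1) := by
  have hdiv : Tendsto (fun R : ℝ => ‖x‖ ^ 2 / R ^ 2) atTop (nhds 0) :=
    Tendsto.const_div_atTop (tendsto_pow_atTop two_ne_zero) _
  simpa [cutoff] using ((tendsto_const_nhds (x := (0 : ℝ))).max
    ((tendsto_const_nhds (x := (1 : ℝ))).sub hdiv)).pow 2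

variable [InnerProductSpace ℝ E]

theorem contDiff_cutoff (R : ℝ) : ContDiff ℝ 1 (cutoff R : E → ℝ) :=
  contDiff_max_zero_sq.comp (contDiff_const.sub ((contDiff_norm_sq ℝ).div_const _))

@[fun_prop]
theorem continuous_cutoff (R : ℝ) : Continuous (cutoff R : E → ℝ) := (contDiff_cutoff R).continuous

theorem hasCompactSupport_cutoff [FiniteDimensional ℝ E] (hR : 0 < R) :
    HasCompactSupport (cutoff R : E → ℝ) :=
  HasCompactSupport.intro (isCompact_closedBall 0 R) fun _ hx =>
    cutoff_eq_zero hR (not_le.1 (by simpa using hx)).le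

variable [CompleteSpace E]

theorem gradient_cutoff (R : ℝ) (x : E) :
    ∇ (cutoff R) x = (-(4 / R ^ 2) * max 0 (1 - ‖x‖ ^ 2 / R ^ 2)) • x := by
  have hinner : HasGradientAt (fun y : E => 1 - ‖y‖ ^ 2 / R ^ 2) (-(1 / R ^ 2) • (2 : ℝ) • x) x :=
    hasGradientAt_comp (f := fun y => ‖y‖ ^ 2) (φ := fun r => 1 - r / R ^ 2)
      (((hasDerivAt_id' _).div_const _).const_sub 1) (hasGradientAt_norm_sq x)
  refine (hasGradientAt_comp (hasDerivAt_max_zero_sq _) hinner).gradient.trans ?_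
  simp only [smul_smul]
  congr 1
  ring

theorem norm_gradient_cutoff_mul_norm_le (hR : 0 < R) (x : E) :
    ‖∇ (cutoff R) x‖ * ‖x‖ ≤ 4 := by
  rw [gradient_cutoff, norm_smul, norm_mul, norm_neg, Real.norm_of_nonneg (by positivity),
    Real.norm_of_nonneg (le_max_left _ _)]
  rcases le_total R ‖x‖ with hx | hx
  · rw [max_zero_one_sub_norm_sq_div_eq_zero hR hx]
    norm_num
  · have hratio : 0 ≤ ‖x‖ ^ 2 / R ^ 2 := by positivity
    calc 4 / R ^ 2 * max 0 (1 - ‖x‖ ^ 2 / R ^ 2) * ‖x‖ * ‖x‖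
        ≤ 4 / R ^ 2 * 1 * R * R := by
          gcongr
          exact max_le zero_le_one (by linarith)
      _ = 4 := by field_simp

theorem norm_gradient_cutoff_le (hR : 0 < R) (x : E) : ‖∇ (cutoff R) x‖ ≤ 4 / R := by
  rw [gradient_cutoff, norm_smul, norm_mul, norm_neg, Real.norm_of_nonneg (by positivity),
    Real.norm_of_nonneg (le_max_left _ _)]
  rcases le_total R ‖x‖ with hx | hx
  · rw [max_zero_one_sub_norm_sq_div_eq_zero hR hx]
    simp only [mul_zero, zero_mul]
    positivity
  · have hratio : 0 ≤ ‖x‖ ^ 2 / R ^ 2 := by positivity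
    calc 4 / R ^ 2 * max 0 (1 - ‖x‖ ^ 2 / R ^ 2) * ‖x‖
        ≤ 4 / R ^ 2 * 1 * R := by
          gcongr
          exact max_le zero_le_one (by linarith)
      _ = 4 / R := by field_simp

theorem tendsto_gradient_cutoff (x : E) :
    Tendsto (fun R : ℝ => ∇ (cutoff R) x) atTop (nhds 0) :=
  squeeze_zero_norm' ((eventually_gt_atTop 0).mono fun _ hR => norm_gradient_cutoff_le hR x)
    (tendsto_id.const_div_atTop 4)

end Cutoff

/-! ### Integrals against the cutoff -/

section CutoffIntegral

variable {E : Type*} [NormedAddCommGroup E] [InnerProductSpace ℝ E] [FiniteDimensional ℝ E]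
  [MeasurableSpace E] [BorelSpace E] {R : ℝ} {f : E → ℝ}

theorem integrable_cutoff_mul (hR : 0 < R) (hf : Continuous f) :
    Integrable fun x => cutoff R x * f x :=
  ((continuous_cutoff R).mul hf).integrable_of_hasCompactSupport
    (hasCompactSupport_cutoff hR).mul_right

theorem integral_cutoff_mul_le (hf : Integrable f) (hf₀ : ∀ x, 0 ≤ f x) (R : ℝ) :
    ∫ x, cutoff R x * f x ≤ ∫ x, f x :=
  integral_mono_of_nonneg (Eventually.of_forall fun x => mul_nonneg (cutoff_nonneg R x) (hf₀ x))
    hf (Eventually.of_forall fun x => mul_le_of_le_one_left (hf₀ x) (cutoff_le_one R x))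

theorem tendsto_integral_cutoff_mul (hf : Integrable f) :
    Tendsto (fun R : ℝ => ∫ x, cutoff R x * f x) atTop (nhds (∫ x, f x)) := by
  refine tendsto_integral_filter_of_dominated_convergence (fun x => ‖f x‖)
    (Eventually.of_forall fun R =>
      (continuous_cutoff R).aestronglyMeasurable.mul hf.aestronglyMeasurable)
    (Eventually.of_forall fun R => Eventually.of_forall fun x => ?_) hf.norm
    (Eventually.of_forall fun x => ?_)
  · rw [norm_mul, Real.norm_of_nonneg (cutoff_nonneg R x)]
    exact mul_le_of_le_one_left (norm_nonneg _) (cutoff_le_one R x)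
  · simpa using (tendsto_cutoff x).mul_const (f x)

theorem integral_cutoff_mul_divergence_le (hR : 0 < R) {F : E → E} (hF : ContDiff ℝ 1 F)
    {H : E → ℝ} (hH : Integrable H) (hFH : ∀ x, ‖F x‖ ≤ H x) :
    ∫ x, cutoff R x * divergence F x ≤ 4 / R * ∫ x, H x := by
  rw [integral_mul_divergence (contDiff_cutoff R) (hasCompactSupport_cutoff hR) hF,
    ← integral_const_mul]
  refine (neg_le_abs _).trans ((Real.norm_eq_abs _).symm.trans_le <|
    norm_integral_le_of_norm_le (hH.const_mul _) (Eventually.of_forall fun x => ?_))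
  calc ‖⟪∇ (cutoff R) x, F x⟫‖ ≤ ‖∇ (cutoff R) x‖ * ‖F x‖ := norm_inner_le_norm _ _
    _ ≤ 4 / R * H x := by
      gcongr
      · exact norm_gradient_cutoff_le hR x
      · exact hFH x

theorem tendsto_integral_cutoff_mul_divergence {F : E → E} (hF : ContDiff ℝ 1 F) {H : E → ℝ}
    (hH : Integrable H) (hFH : ∀ x, ‖F x‖ ≤ ‖x‖ * H x) :
    Tendsto (fun R : ℝ => ∫ x, cutoff R x * divergence F x) atTop (nhds 0) := by
  have hlim : Tendsto (fun R : ℝ => ∫ x, ⟪∇ (cutoff R) x, F x⟫) atTop (nhds (∫ _ : E, 0)) := by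
    refine tendsto_integral_filter_of_dominated_convergence (fun x => 4 * ‖H x‖)
      (Eventually.of_forall fun R => Continuous.aestronglyMeasurable ?_)
      ((eventually_gt_atTop 0).mono fun R hR => Eventually.of_forall fun x => ?_)
      (hH.norm.const_mul 4) (Eventually.of_forall fun x => ?_)
    · have := (contDiff_gradient (n := 0) (contDiff_cutoff (E := E) R)).continuous
      fun_prop
    · calc ‖⟪∇ (cutoff R) x, F x⟫‖ ≤ ‖∇ (cutoff R) x‖ * ‖F x‖ := norm_inner_le_norm _ _
        _ ≤ ‖∇ (cutoff R) x‖ * (‖x‖ * ‖H x‖) := by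
          gcongr
          exact (hFH x).trans (by gcongr; exact le_abs_self _)
        _ = ‖∇ (cutoff R) x‖ * ‖x‖ * ‖H x‖ := by ring
        _ ≤ 4 * ‖H x‖ := by
          gcongr
          exact norm_gradient_cutoff_mul_norm_le hR x
    · simpa only [inner_zero_left] using
        (tendsto_gradient_cutoff x).inner (𝕜 := ℝ) (tendsto_const_nhds (x := F x))
  have hneg := hlim.neg
  rw [integral_zero, neg_zero] at hneg
  refine hneg.congr' ?_
  filter_upwards [eventually_gt_atTop 0] with R hR
  exact (integral_mul_divergence (contDiff_cutoff R) (hasCompactSupport_cutoff hR) hF).symm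

theorem hasDerivAt_integral_cutoff_mul (hR : 0 < R) {e : E → ℝ → ℝ}
    (he : ContDiff ℝ 1 (Function.uncurry e)) (t : ℝ) :
    HasDerivAt (fun s => ∫ x, cutoff R x * e x s) (∫ x, cutoff R x * deriv (e x) t) t := by
  have hdiff : ∀ x s, HasDerivAt (e x) (deriv (e x) s) s := fun x s =>
    ((he.comp (contDiff_prodMk_right x)).differentiable one_ne_zero s).hasDerivAt
  have he' : Continuous (Function.uncurry fun x s => deriv (e x) s) :=
    (contDiff_uncurry_deriv (n := 0) he).continuous
  have hcont : ∀ s, Continuous fun x => e x s := fun s =>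
    he.continuous.comp (by fun_prop : Continuous fun x : E => (x, s))
  have hcont' : ∀ s, Continuous fun x => deriv (e x) s := fun s =>
    he'.comp (by fun_prop : Continuous fun x : E => (x, s))
  obtain ⟨C, hC⟩ := ((isCompact_closedBall (0 : E) R).prod
    (isCompact_Icc (a := t - 1) (b := t + 1))).exists_bound_of_continuousOn he'.continuousOn
  refine (hasDerivAt_integral_of_dominated_loc_of_deriv_le
    (F := fun s x => cutoff R x * e x s) (bound := fun x => cutoff R x * C)
    (Icc_mem_nhds (a := t - 1) (b := t + 1) (by linarith) (by linarith))
    (Eventually.of_forall fun s => (integrable_cutoff_mul hR (hcont s)).aestronglyMeasurable)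
    (integrable_cutoff_mul hR (hcont t))
    (integrable_cutoff_mul hR (hcont' t)).aestronglyMeasurable
    (Eventually.of_forall fun x s hs => ?_) (integrable_cutoff_mul hR continuous_const)
    (Eventually.of_forall fun x s _ => (hdiff x s).const_mul _)).2
  rw [norm_mul, Real.norm_of_nonneg (cutoff_nonneg R x)]
  rcases le_total R ‖x‖ with hx | hx
  · simp [cutoff_eq_zero hR hx]
  · exact mul_le_mul_of_nonneg_left (hC (x, s) ⟨by simpa using hx, hs⟩) (cutoff_nonneg R x)

end CutoffIntegral

/-! ### Hardy's inequality -/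

section Hardy

variable {E : Type*} [NormedAddCommGroup E] [InnerProductSpace ℝ E]

theorem contDiff_inv_add_norm_sq {ε : ℝ} (hε : 0 < ε) {n : WithTop ℕ∞} :
    ContDiff ℝ n fun x : E => (ε + ‖x‖ ^ 2)⁻¹ :=
  (contDiff_const.add (contDiff_norm_sq ℝ)).inv fun x => by positivity

theorem hasGradientAt_inv_add_norm_sq [CompleteSpace E] {ε : ℝ} (hε : 0 < ε) (x : E) :
    HasGradientAt (fun y => (ε + ‖y‖ ^ 2)⁻¹) ((-2 * (ε + ‖x‖ ^ 2)⁻¹ ^ 2) • x) x := by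
  have hpos : 0 < ε + ‖x‖ ^ 2 := by positivity
  have hderiv : HasDerivAt (fun r : ℝ => (ε + r)⁻¹) (-1 / (ε + ‖x‖ ^ 2) ^ 2) (‖x‖ ^ 2) :=
    ((hasDerivAt_id' (‖x‖ ^ 2)).const_add ε).fun_inv hpos.ne'
  convert hasGradientAt_comp (f := fun y : E => ‖y‖ ^ 2) hderiv (hasGradientAt_norm_sq x) using 1
  rw [smul_smul]
  congr 1
  field_simp

variable [FiniteDimensional ℝ E] {f : E → ℝ}

theorem divergence_sq_mul_inv_add_norm_sq_smul_id {ε : ℝ} (hε : 0 < ε)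
    (hf : Differentiable ℝ f) (x : E) :
    divergence (fun y => (f y ^ 2 * (ε + ‖y‖ ^ 2)⁻¹) • y) x
      = 2 * (ε + ‖x‖ ^ 2)⁻¹ * f x * ⟪x, ∇ f x⟫
        + (Module.finrank ℝ E - 2 * ((ε + ‖x‖ ^ 2)⁻¹ * ‖x‖ ^ 2)) * ((ε + ‖x‖ ^ 2)⁻¹ * f x ^ 2) := by
  rw [divergence_smul (F := fun y => y)
    (hasGradientAt_mul (hasGradientAt_pow 2 (hf x).hasGradientAt)
      (hasGradientAt_inv_add_norm_sq hε x)) differentiableAt_id, divergence_id]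
  simp only [inner_add_left, real_inner_smul_left, real_inner_self_eq_norm_sq,
    real_inner_comm x (∇ f x), Nat.cast_ofNat, Nat.add_one_sub_one, pow_one]
  ring

theorem mul_sq_sub_norm_gradient_sq_le_divergence {ε : ℝ} (hε : 0 < ε)
    (hdim : 2 < Module.finrank ℝ E) (hf : Differentiable ℝ f) (x : E) :
    ((Module.finrank ℝ E - 2) / 2) ^ 2 * ((ε + ‖x‖ ^ 2)⁻¹ * f x ^ 2) - ‖∇ f x‖ ^ 2
      ≤ (Module.finrank ℝ E - 2) / 2 *
        divergence (fun y => (f y ^ 2 * (ε + ‖y‖ ^ 2)⁻¹) • y) x := by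
  rw [divergence_sq_mul_inv_add_norm_sq_smul_id hε hf]
  have hdim' : (2 : ℝ) < Module.finrank ℝ E := by exact_mod_cast hdim
  set κ : ℝ := (Module.finrank ℝ E - 2) / 2 with hκ
  have hn : (Module.finrank ℝ E : ℝ) = 2 * κ + 2 := by rw [hκ]; ring
  have : 0 < κ := by linarith
  set p : ℝ := (ε + ‖x‖ ^ 2)⁻¹
  have hp₀ : 0 < p := by positivity
  have hpx : p * ‖x‖ ^ 2 ≤ 1 := by
    have : p * (ε + ‖x‖ ^ 2) = 1 := inv_mul_cancel₀ (by positivity)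
    nlinarith
  have hinner : p * ⟪x, ∇ f x⟫ ^ 2 ≤ ‖∇ f x‖ ^ 2 :=
    calc p * ⟪x, ∇ f x⟫ ^ 2 ≤ p * (‖x‖ * ‖∇ f x‖) ^ 2 := by
          rw [← sq_abs]
          gcongr
          exact abs_real_inner_le_norm x (∇ f x)
      _ = p * ‖x‖ ^ 2 * ‖∇ f x‖ ^ 2 := by ring
      _ ≤ ‖∇ f x‖ ^ 2 := mul_le_of_le_one_left (sq_nonneg _) hpx
  have hcross : 0 ≤ p * (κ * f x + ⟪x, ∇ f x⟫) ^ 2 := by positivity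
  have hmain : κ * (2 * κ * (p * f x ^ 2))
      ≤ κ * ((2 * κ + 2 - 2 * (p * ‖x‖ ^ 2)) * (p * f x ^ 2)) := by
    gcongr
    linarith
  rw [hn]
  linarith

variable [MeasurableSpace E] [BorelSpace E]

theorem hardy_inequality_regularized {ε : ℝ} (hε : 0 < ε) (hdim : 2 < Module.finrank ℝ E)
    (hf : ContDiff ℝ 1 f) (hint : Integrable fun x => (ε + ‖x‖ ^ 2)⁻¹ * f x ^ 2)
    (hgrad : Integrable fun x => ‖∇ f x‖ ^ 2) :
    ((Module.finrank ℝ E - 2) / 2) ^ 2 * ∫ x, (ε + ‖x‖ ^ 2)⁻¹ * f x ^ 2 ≤ ∫ x, ‖∇ f x‖ ^ 2 := by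
  have hF : ContDiff ℝ 1 fun y : E => (f y ^ 2 * (ε + ‖y‖ ^ 2)⁻¹) • y :=
    ((hf.pow 2).mul (contDiff_inv_add_norm_sq hε)).smul contDiff_id
  have hdivergence : Tendsto (fun R : ℝ => ∫ x, cutoff R x *
      divergence (fun y : E => (f y ^ 2 * (ε + ‖y‖ ^ 2)⁻¹) • y) x) atTop (nhds 0) := by
    refine tendsto_integral_cutoff_mul_divergence hF hint fun x => le_of_eq ?_
    rw [norm_smul, Real.norm_of_nonneg (by positivity)]
    ring
  have hsub : Integrable fun x => ((Module.finrank ℝ E - 2) / 2 : ℝ) ^ 2 *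
      ((ε + ‖x‖ ^ 2)⁻¹ * f x ^ 2) - ‖∇ f x‖ ^ 2 := (hint.const_mul _).sub hgrad
  have hlower := tendsto_integral_cutoff_mul hsub
  have hle := le_of_tendsto_of_tendsto hlower
    (hdivergence.const_mul (((Module.finrank ℝ E - 2) / 2 : ℝ))) ?_
  · rwa [mul_zero, integral_sub (hint.const_mul _) hgrad, integral_const_mul, sub_nonpos] at hle
  · filter_upwards [eventually_gt_atTop 0] with R hR
    have := (contDiff_inv_add_norm_sq (E := E) hε (n := 0)).continuous
    have hf' := (contDiff_gradient (n := 0) hf).continuous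
    have hfc := hf.continuous
    rw [← integral_const_mul]
    refine integral_mono (integrable_cutoff_mul hR (by fun_prop))
      ((integrable_cutoff_mul hR (continuous_divergence hF)).const_mul _) fun x => ?_
    refine (mul_le_mul_of_nonneg_left
      (mul_sq_sub_norm_gradient_sq_le_divergence hε hdim (hf.differentiable one_ne_zero) x)
      (cutoff_nonneg R x)).trans_eq (mul_left_comm _ _ _)

theorem integrable_inv_add_norm_sq_mul {ε : ℝ} (hε : 0 < ε) (hf : Continuous f)
    (hint : Integrable fun x => weight x ^ 2 * f x ^ 2) :
    Integrable fun x => (ε + ‖x‖ ^ 2)⁻¹ * f x ^ 2 := by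
  have := (contDiff_inv_add_norm_sq (E := E) hε (n := 0)).continuous
  refine (hint.const_mul (1 + ε⁻¹)).mono' (by fun_prop) (Eventually.of_forall fun x => ?_)
  rw [Real.norm_of_nonneg (by positivity), weight_sq, ← mul_assoc]
  gcongr
  rw [← div_eq_mul_inv, inv_le_iff_one_le_mul₀ (by positivity), div_mul_eq_mul_div,
    one_le_div (by positivity)]
  have : ε⁻¹ * ε = 1 := inv_mul_cancel₀ hε.ne'
  have : 0 ≤ ε⁻¹ * ‖x‖ ^ 2 := by positivity
  nlinarith

theorem ae_ne_zero [Nontrivial E] : ∀ᵐ x : E, x ≠ 0 := by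
  simp [ae_iff, measure_singleton]

theorem hardy_inequality (hdim : 2 < Module.finrank ℝ E) (hf : ContDiff ℝ 1 f)
    (hint : Integrable fun x => weight x ^ 2 * f x ^ 2)
    (hgrad : Integrable fun x => ‖∇ f x‖ ^ 2) :
    Integrable (fun x => f x ^ 2 / ‖x‖ ^ 2) ∧
      ((Module.finrank ℝ E - 2) / 2) ^ 2 * ∫ x, f x ^ 2 / ‖x‖ ^ 2 ≤ ∫ x, ‖∇ f x‖ ^ 2 := by
  have hκ : (0 : ℝ) < ((Module.finrank ℝ E - 2) / 2) ^ 2 := by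
    have : (2 : ℝ) < Module.finrank ℝ E := by exact_mod_cast hdim
    have : (0 : ℝ) < Module.finrank ℝ E - 2 := by linarith
    positivity
  have : Nontrivial E := Module.nontrivial_of_finrank_pos (R := ℝ) (by omega)
  rw [← le_div_iff₀' hκ]
  refine integrable_and_integral_le_of_tendsto (l := atTop)
    (F := fun (n : ℕ) x => ((n + 1 : ℝ)⁻¹ + ‖x‖ ^ 2)⁻¹ * f x ^ 2) (fun n => ?_)
    (fun n x => by positivity) (Eventually.of_forall fun n => ?_) ?_
  · have := (contDiff_inv_add_norm_sq (E := E) (ε := (n + 1 : ℝ)⁻¹) (by positivity)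
      (n := 0)).continuous
    have hfc := hf.continuous
    fun_prop
  · have hn := integrable_inv_add_norm_sq_mul (ε := (n + 1 : ℝ)⁻¹) (by positivity)
      hf.continuous hint
    exact ⟨hn, (le_div_iff₀' hκ).2 (hardy_inequality_regularized (by positivity) hdim hf hn hgrad)⟩
  · filter_upwards [ae_ne_zero] with x hx
    have hinv : Tendsto (fun n : ℕ => (n + 1 : ℝ)⁻¹) atTop (nhds 0) := by
      simpa only [one_div] using tendsto_one_div_add_atTop_nhds_zero_nat (𝕜 := ℝ)
    simpa [div_eq_inv_mul] using
      ((hinv.add_const (‖x‖ ^ 2)).inv₀ (by simpa using hx)).mul_const (f x ^ 2)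

theorem integral_sq_div_norm_sq_le_four_mul (hdim : 2 < Module.finrank ℝ E) (hf : ContDiff ℝ 1 f)
    (hint : Integrable fun x => weight x ^ 2 * f x ^ 2)
    (hgrad : Integrable fun x => ‖∇ f x‖ ^ 2) :
    ∫ x, f x ^ 2 / ‖x‖ ^ 2 ≤ 4 * ∫ x, ‖∇ f x‖ ^ 2 := by
  have hκ : (1 / 2 : ℝ) ^ 2 ≤ ((Module.finrank ℝ E - 2) / 2) ^ 2 := by
    have : (3 : ℝ) ≤ Module.finrank ℝ E := by exact_mod_cast hdim
    gcongr
    linarith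
  have hnonneg : 0 ≤ ∫ x, f x ^ 2 / ‖x‖ ^ 2 := integral_nonneg fun x => by positivity
  linarith [(hardy_inequality hdim hf hint hgrad).2, mul_le_mul_of_nonneg_right hκ hnonneg]

end Hardy

/-! ### Differential balance laws -/

section LocalBalance

variable {E : Type*} [NormedAddCommGroup E] [InnerProductSpace ℝ E]

/-- At each time `t ∈ I`, the function `H` is integrable in space with integral at most `K`. -/
def IntegralBoundedOn {α : Type*} [MeasureSpace α] (I : Set ℝ) (H : α → ℝ → ℝ) (K : ℝ) : Prop :=
  ∀ t ∈ I, (Integrable fun x => H x t) ∧ ∫ x, H x t ≤ K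

theorem IntegralBoundedOn.const_mul {α : Type*} [MeasureSpace α] {I : Set ℝ} {H : α → ℝ → ℝ}
    {K : ℝ} (hH : IntegralBoundedOn I H K) {a : ℝ} (ha : 0 ≤ a) :
    IntegralBoundedOn I (fun x t => a * H x t) (a * K) := fun t ht =>
  ⟨(hH t ht).1.const_mul a, by
    rw [integral_const_mul]
    exact mul_le_mul_of_nonneg_left (hH t ht).2 ha⟩

/-- The differential inequality `∂ₜe ≤ div F + G` between a density `e`, a flux `F` and a source
`G`, at the times `t ∈ I`. -/
structure LocalBalanceOn (I : Set ℝ) (e : E → ℝ → ℝ) (F : E → ℝ → E) (G : E → ℝ → ℝ) : Prop where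
  contDiff_density : ContDiff ℝ 1 (Function.uncurry e)
  contDiff_flux : ∀ t, ContDiff ℝ 1 fun x => F x t
  continuous_source : ∀ t, Continuous fun x => G x t
  deriv_le : ∀ t ∈ I, ∀ x, deriv (e x) t ≤ divergence (fun y => F y t) x + G x t

namespace LocalBalanceOn

variable {I : Set ℝ} {e e' : E → ℝ → ℝ} {F F' : E → ℝ → E} {G G' H : E → ℝ → ℝ}
  {t₁ t₂ K γ : ℝ}

theorem differentiableAt_density (h : LocalBalanceOn I e F G) (x : E) (t : ℝ) :
    DifferentiableAt ℝ (e x) t :=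
  (h.contDiff_density.comp (contDiff_prodMk_right x)).differentiable one_ne_zero t

theorem continuous_density (h : LocalBalanceOn I e F G) (t : ℝ) : Continuous fun x => e x t :=
  h.contDiff_density.continuous.comp (by fun_prop : Continuous fun x : E => (x, t))

theorem add (h : LocalBalanceOn I e F G) (h' : LocalBalanceOn I e' F' G') :
    LocalBalanceOn I (fun x t => e x t + e' x t) (fun x t => F x t + F' x t)
      (fun x t => G x t + G' x t) where
  contDiff_density := h.contDiff_density.add h'.contDiff_density
  contDiff_flux t := (h.contDiff_flux t).add (h'.contDiff_flux t)
  continuous_source t := (h.continuous_source t).add (h'.continuous_source t)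
  deriv_le t ht x := by
    rw [deriv_fun_add (h.differentiableAt_density x t) (h'.differentiableAt_density x t),
      divergence_add ((h.contDiff_flux t).differentiable one_ne_zero x)
        ((h'.contDiff_flux t).differentiable one_ne_zero x)]
    linarith [h.deriv_le t ht x, h'.deriv_le t ht x]

theorem mono_source (h : LocalBalanceOn I e F G) (hG' : ∀ t, Continuous fun x => G' x t)
    (hle : ∀ t ∈ I, ∀ x, G x t ≤ G' x t) : LocalBalanceOn I e F G' where
  contDiff_density := h.contDiff_density
  contDiff_flux := h.contDiff_flux
  continuous_source := hG'
  deriv_le t ht x := by linarith [h.deriv_le t ht x, hle t ht x]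

variable [FiniteDimensional ℝ E]

theorem time_mul (h : LocalBalanceOn I e F G) {ψ : ℝ → ℝ} (hψ : ContDiff ℝ 1 ψ)
    (hψ₀ : ∀ t ∈ I, 0 ≤ ψ t) :
    LocalBalanceOn I (fun x t => ψ t * e x t) (fun x t => ψ t • F x t)
      (fun x t => deriv ψ t * e x t + ψ t * G x t) where
  contDiff_density := (hψ.comp contDiff_snd).mul h.contDiff_density
  contDiff_flux t := contDiff_const.smul (h.contDiff_flux t)
  continuous_source t := (continuous_const.mul (h.continuous_density t)).add
      (continuous_const.mul (h.continuous_source t))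
  deriv_le t ht x := by
    rw [deriv_fun_mul (hψ.differentiable one_ne_zero t) (h.differentiableAt_density x t),
      divergence_smul (hasGradientAt_const x (ψ t))
        ((h.contDiff_flux t).differentiable one_ne_zero x), inner_zero_left]
    nlinarith [mul_le_mul_of_nonneg_left (h.deriv_le t ht x) (hψ₀ t ht)]

variable [MeasurableSpace E] [BorelSpace E]

theorem integral_cutoff_mul_sub_le (h : LocalBalanceOn (Set.Icc t₁ t₂) e F G) (h12 : t₁ ≤ t₂)
    (hH : IntegralBoundedOn (Set.Icc t₁ t₂) H K)
    (hFH : ∀ t ∈ Set.Icc t₁ t₂, ∀ x, ‖F x t‖ ≤ H x t)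
    (hG : IntegralBoundedOn (Set.Icc t₁ t₂) G γ) (hG₀ : ∀ t ∈ Set.Icc t₁ t₂, ∀ x, 0 ≤ G x t)
    {R : ℝ} (hR : 0 < R) :
    (∫ x, cutoff R x * e x t₂) - ∫ x, cutoff R x * e x t₁ ≤ (γ + 4 / R * K) * (t₂ - t₁) := by
  have hderiv := hasDerivAt_integral_cutoff_mul hR h.contDiff_density
  refine (convex_Icc t₁ t₂).image_sub_le_mul_sub_of_deriv_le
    (fun t _ => (hderiv t).continuousAt.continuousWithinAt)
    (fun t _ => (hderiv t).differentiableAt.differentiableWithinAt) (fun t ht => ?_)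
    t₁ ⟨le_rfl, h12⟩ t₂ ⟨h12, le_rfl⟩ h12
  replace ht : t ∈ Set.Icc t₁ t₂ := interior_subset ht
  have hFt := h.contDiff_flux t
  have hdiv := integrable_cutoff_mul hR (continuous_divergence hFt)
  have hsource := integrable_cutoff_mul hR (h.continuous_source t)
  calc deriv (fun s => ∫ x, cutoff R x * e x s) t = ∫ x, cutoff R x * deriv (e x) t :=
        (hderiv t).deriv
    _ ≤ ∫ x, (cutoff R x * divergence (fun y => F y t) x + cutoff R x * G x t) := by
        refine integral_mono (integrable_cutoff_mul hR
          ((contDiff_uncurry_deriv (n := 0) h.contDiff_density).continuous.comp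
            (by fun_prop : Continuous fun x : E => (x, t)))) (hdiv.add hsource) fun x => ?_
        rw [← mul_add]
        exact mul_le_mul_of_nonneg_left (h.deriv_le t ht x) (cutoff_nonneg R x)
    _ = (∫ x, cutoff R x * divergence (fun y => F y t) x) + ∫ x, cutoff R x * G x t :=
        integral_add hdiv hsource
    _ ≤ 4 / R * K + γ := by
        gcongr
        · exact (integral_cutoff_mul_divergence_le hR hFt (hH t ht).1 (hFH t ht)).trans
            (by gcongr; exact (hH t ht).2)
        · exact (integral_cutoff_mul_le (hG t ht).1 (hG₀ t ht) R).trans (hG t ht).2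
    _ = γ + 4 / R * K := add_comm _ _

theorem tendsto_rate_add_div_mul (K γ T : ℝ) :
    Tendsto (fun R : ℝ => (γ + 4 / R * K) * T) atTop (nhds (γ * T)) := by
  simpa using (((tendsto_id.const_div_atTop (4 : ℝ)).mul_const K).const_add γ).mul_const T

theorem integral_sub_le (h : LocalBalanceOn (Set.Icc t₁ t₂) e F G) (h12 : t₁ ≤ t₂)
    (hH : IntegralBoundedOn (Set.Icc t₁ t₂) H K)
    (hFH : ∀ t ∈ Set.Icc t₁ t₂, ∀ x, ‖F x t‖ ≤ H x t)
    (hG : IntegralBoundedOn (Set.Icc t₁ t₂) G γ) (hG₀ : ∀ t ∈ Set.Icc t₁ t₂, ∀ x, 0 ≤ G x t)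
    (he₁ : Integrable fun x => e x t₁) (he₂ : Integrable fun x => e x t₂) :
    (∫ x, e x t₂) - ∫ x, e x t₁ ≤ γ * (t₂ - t₁) :=
  le_of_tendsto_of_tendsto
    ((tendsto_integral_cutoff_mul he₂).sub (tendsto_integral_cutoff_mul he₁))
    (tendsto_rate_add_div_mul K γ _)
    ((eventually_gt_atTop 0).mono fun _ hR =>
      h.integral_cutoff_mul_sub_le h12 hH hFH hG hG₀ hR)

theorem integrable_and_integral_le (h : LocalBalanceOn (Set.Icc t₁ t₂) e F G) (h12 : t₁ ≤ t₂)
    (hH : IntegralBoundedOn (Set.Icc t₁ t₂) H K)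
    (hFH : ∀ t ∈ Set.Icc t₁ t₂, ∀ x, ‖F x t‖ ≤ H x t)
    (hG : IntegralBoundedOn (Set.Icc t₁ t₂) G γ) (hG₀ : ∀ t ∈ Set.Icc t₁ t₂, ∀ x, 0 ≤ G x t)
    (he₀ : ∀ x t, 0 ≤ e x t) (he₁ : Integrable fun x => e x t₁) :
    (Integrable fun x => e x t₂) ∧ ∫ x, e x t₂ ≤ (∫ x, e x t₁) + γ * (t₂ - t₁) := by
  have hint : Integrable fun x => e x t₂ := by
    refine (integrable_and_integral_le_of_tendsto (l := atTop) (F := fun R x => cutoff R x * e x t₂)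
      (B := (∫ x, e x t₁) + (γ * (t₂ - t₁) + 1)) (fun R => ?_)
      (fun R x => mul_nonneg (cutoff_nonneg R x) (he₀ x t₂)) ?_
      (Eventually.of_forall fun x => ?_)).1
    · exact ((continuous_cutoff R).mul (h.continuous_density t₂)).aestronglyMeasurable
    · filter_upwards [eventually_gt_atTop 0,
        (tendsto_rate_add_div_mul K γ (t₂ - t₁)).eventually_le_const (lt_add_one _)] with R hR hrate
      refine ⟨integrable_cutoff_mul hR (h.continuous_density t₂), ?_⟩
      linarith [h.integral_cutoff_mul_sub_le h12 hH hFH hG hG₀ hR,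
        integral_cutoff_mul_le he₁ (he₀ · t₁) R]
    · simpa using (tendsto_cutoff x).mul_const (e x t₂)
  exact ⟨hint, by linarith [h.integral_sub_le h12 hH hFH hG hG₀ he₁ hint]⟩

end LocalBalanceOn

end LocalBalance

/-! ### Energy densities -/

section Densities

variable {E : Type*} [NormedAddCommGroup E] [InnerProductSpace ℝ E] [CompleteSpace E]

/-- The energy density `|∇u|² + (∂ₜu)²`. -/
noncomputable def energyDensity (u : E → ℝ → ℝ) (x : E) (t : ℝ) : ℝ :=
  ‖∇ (fun y => u y t) x‖ ^ 2 + deriv (u x) t ^ 2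

/-- The energy density completed by `⟨x⟩⁻² u²`, which Hardy's inequality controls by the energy. -/
noncomputable def hardyDensity (u : E → ℝ → ℝ) (x : E) (t : ℝ) : ℝ :=
  energyDensity u x t + weight x ^ 2 * u x t ^ 2

/-- The density `⟨x⟩⁻⁸ (|∇u|² + (∂ₜu)² + u²)`, whose decay expresses that the wave leaves every
bounded region. -/
noncomputable def localDensity (u : E → ℝ → ℝ) (x : E) (t : ℝ) : ℝ :=
  weight x ^ 8 * (energyDensity u x t + u x t ^ 2)

theorem sq_norm_gradient_le_energyDensity (u : E → ℝ → ℝ) (x : E) (t : ℝ) :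
    ‖∇ (fun y => u y t) x‖ ^ 2 ≤ energyDensity u x t :=
  le_add_of_nonneg_right (sq_nonneg _)

theorem sq_deriv_le_energyDensity (u : E → ℝ → ℝ) (x : E) (t : ℝ) :
    deriv (u x) t ^ 2 ≤ energyDensity u x t :=
  le_add_of_nonneg_left (sq_nonneg _)

theorem energyDensity_nonneg (u : E → ℝ → ℝ) (x : E) (t : ℝ) : 0 ≤ energyDensity u x t := by
  unfold energyDensity; positivity

theorem hardyDensity_nonneg (u : E → ℝ → ℝ) (x : E) (t : ℝ) : 0 ≤ hardyDensity u x t :=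
  add_nonneg (energyDensity_nonneg u x t) (by positivity)

theorem localDensity_nonneg (u : E → ℝ → ℝ) (x : E) (t : ℝ) : 0 ≤ localDensity u x t :=
  mul_nonneg (pow_nonneg (weight_pos x).le 8)
    (add_nonneg (energyDensity_nonneg u x t) (sq_nonneg _))

theorem energyDensity_le_hardyDensity (u : E → ℝ → ℝ) (x : E) (t : ℝ) :
    energyDensity u x t ≤ hardyDensity u x t :=
  le_add_of_nonneg_right (by positivity)

theorem localDensity_le_hardyDensity (u : E → ℝ → ℝ) (x : E) (t : ℝ) :
    localDensity u x t ≤ hardyDensity u x t := by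
  have hg := (weight_pos x).le
  rw [localDensity, hardyDensity, mul_add]
  gcongr ?_ + ?_ * _
  · exact mul_le_of_le_one_left (energyDensity_nonneg u x t) (pow_le_one₀ hg (weight_le_one x))
  · exact pow_le_pow_of_le_one hg (weight_le_one x) (by norm_num)

theorem energyDensity_translate (u : E → ℝ → ℝ) (s : ℝ) (x : E) (t : ℝ) :
    energyDensity (fun x t => u x (t + s)) x t = energyDensity u x (t + s) := by
  simp [energyDensity, deriv_comp_add_const]

/-- The energy flux `2 ∂ₜu ∇u`. -/
noncomputable def energyFlux (u : E → ℝ → ℝ) (x : E) (t : ℝ) : E :=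
  (2 * deriv (u x) t) • ∇ (fun y => u y t) x

theorem norm_energyFlux_le (u : E → ℝ → ℝ) (x : E) (t : ℝ) :
    ‖energyFlux u x t‖ ≤ energyDensity u x t := by
  rw [energyFlux, norm_smul, norm_mul, Real.norm_ofNat, energyDensity, ← sq_abs (deriv (u x) t),
    Real.norm_eq_abs]
  nlinarith [sq_nonneg (|deriv (u x) t| - ‖∇ (fun y => u y t) x‖)]

end Densities

/-! ### Free waves -/

section FreeWaves

variable {E : Type*} [NormedAddCommGroup E] [InnerProductSpace ℝ E] [FiniteDimensional ℝ E]
  {u v : E → ℝ → ℝ}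

/-- A classical solution of the free wave equation `∂ₜ²u = Δu`. -/
structure IsFreeWave (u : E → ℝ → ℝ) : Prop where
  contDiff : ContDiff ℝ 2 (Function.uncurry u)
  deriv_deriv_eq_laplacian : ∀ x t, deriv (fun s => deriv (u x) s) t = Δ (fun y => u y t) x

namespace IsFreeWave

theorem contDiff_space (hu : IsFreeWave u) (t : ℝ) : ContDiff ℝ 2 fun x => u x t :=
  hu.contDiff.comp (contDiff_prodMk_left t)

theorem contDiff_deriv (hu : IsFreeWave u) :
    ContDiff ℝ 1 (Function.uncurry fun x t => deriv (u x) t) :=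
  contDiff_uncurry_deriv hu.contDiff

theorem contDiff_gradient (hu : IsFreeWave u) :
    ContDiff ℝ 1 (Function.uncurry fun x t => ∇ (fun y => u y t) x) :=
  contDiff_uncurry_gradient hu.contDiff

theorem contDiff_deriv_space (hu : IsFreeWave u) (t : ℝ) : ContDiff ℝ 1 fun x => deriv (u x) t :=
  hu.contDiff_deriv.comp (contDiff_prodMk_left t)

theorem contDiff_gradient_space (hu : IsFreeWave u) (t : ℝ) :
    ContDiff ℝ 1 fun x => ∇ (fun y => u y t) x :=
  hu.contDiff_gradient.comp (contDiff_prodMk_left t)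

theorem hasGradientAt (hu : IsFreeWave u) (x : E) (t : ℝ) :
    HasGradientAt (fun y => u y t) (∇ (fun y => u y t) x) x :=
  ((hu.contDiff_space t).differentiable two_ne_zero x).hasGradientAt

theorem hasGradientAt_deriv (hu : IsFreeWave u) (x : E) (t : ℝ) :
    HasGradientAt (fun y => deriv (u y) t) (∇ (fun y => deriv (u y) t) x) x :=
  ((hu.contDiff_deriv_space t).differentiable one_ne_zero x).hasGradientAt

theorem hasDerivAt (hu : IsFreeWave u) (x : E) (t : ℝ) : HasDerivAt (u x) (deriv (u x) t) t :=
  ((hu.contDiff.comp (contDiff_prodMk_right x)).differentiable two_ne_zero t).hasDerivAt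

theorem hasDerivAt_deriv (hu : IsFreeWave u) (x : E) (t : ℝ) :
    HasDerivAt (fun s => deriv (u x) s) (Δ (fun y => u y t) x) t := by
  rw [← hu.deriv_deriv_eq_laplacian]
  exact ((hu.contDiff_deriv.comp (contDiff_prodMk_right x)).differentiable
    one_ne_zero t).hasDerivAt

theorem hasDerivAt_gradient (hu : IsFreeWave u) (x : E) (t : ℝ) :
    HasDerivAt (fun s => ∇ (fun y => u y s) x) (∇ (fun y => deriv (u y) t) x) t := by
  rw [← deriv_gradient_eq_gradient_deriv hu.contDiff]
  exact ((hu.contDiff_gradient.comp (contDiff_prodMk_right x)).differentiable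
    one_ne_zero t).hasDerivAt

theorem contDiff_energyDensity (hu : IsFreeWave u) :
    ContDiff ℝ 1 (Function.uncurry (energyDensity u)) :=
  (hu.contDiff_gradient.norm_sq ℝ).add (hu.contDiff_deriv.pow 2)

theorem contDiff_localDensity (hu : IsFreeWave u) :
    ContDiff ℝ 1 (Function.uncurry (localDensity u)) :=
  (((contDiff_weight).comp contDiff_fst).pow 8).mul
    (hu.contDiff_energyDensity.add ((hu.contDiff.of_le one_le_two).pow 2))

theorem continuous_space (hu : IsFreeWave u) (t : ℝ) : Continuous fun x => u x t :=
  (hu.contDiff_space t).continuous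

theorem continuous_energyDensity (hu : IsFreeWave u) (t : ℝ) :
    Continuous fun x => energyDensity u x t :=
  (hu.contDiff_energyDensity.comp (contDiff_prodMk_left t)).continuous

theorem continuous_hardyDensity (hu : IsFreeWave u) (t : ℝ) :
    Continuous fun x => hardyDensity u x t :=
  (hu.continuous_energyDensity t).add
    ((continuous_weight.pow 2).mul ((hu.continuous_space t).pow 2))

theorem continuous_localDensity (hu : IsFreeWave u) (t : ℝ) :
    Continuous fun x => localDensity u x t :=
  (hu.contDiff_localDensity.comp (contDiff_prodMk_left t)).continuous

theorem gradient_linearCombination (hu : IsFreeWave u) (hv : IsFreeWave v) (α β : ℝ) (x : E)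
    (t : ℝ) : ∇ (fun y => α * u y t + β * v y t) x
      = α • ∇ (fun y => u y t) x + β • ∇ (fun y => v y t) x :=
  (hasGradientAt_add (hasGradientAt_const_mul α (hu.hasGradientAt x t))
    (hasGradientAt_const_mul β (hv.hasGradientAt x t))).gradient

theorem deriv_linearCombination (hu : IsFreeWave u) (hv : IsFreeWave v) (α β : ℝ) (x : E)
    (t : ℝ) : deriv (fun s => α * u x s + β * v x s) t = α * deriv (u x) t + β * deriv (v x) t :=
  (((hu.hasDerivAt x t).const_mul α).fun_add ((hv.hasDerivAt x t).const_mul β)).deriv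

theorem linearCombination (hu : IsFreeWave u) (hv : IsFreeWave v) (α β : ℝ) :
    IsFreeWave fun x t => α * u x t + β * v x t where
  contDiff := (contDiff_const.mul hu.contDiff).add (contDiff_const.mul hv.contDiff)
  deriv_deriv_eq_laplacian x t := by
    simp only [hu.deriv_linearCombination hv]
    rw [(((hu.hasDerivAt_deriv x t).const_mul α).fun_add
      ((hv.hasDerivAt_deriv x t).const_mul β)).deriv]
    have hu' := (hu.contDiff_space t).contDiffAt (x := x)
    have hv' := (hv.contDiff_space t).contDiffAt (x := x)
    exact (((hu'.const_smul α).laplacian_add (hv'.const_smul β)).trans (congrArg₂ (· + ·)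
      (InnerProductSpace.laplacian_smul α hu') (InnerProductSpace.laplacian_smul β hv'))).symm

theorem translate (hu : IsFreeWave u) (s : ℝ) : IsFreeWave fun x t => u x (t + s) where
  contDiff := hu.contDiff.comp
    (by fun_prop : ContDiff ℝ 2 fun p : E × ℝ => (p.1, p.2 + s))
  deriv_deriv_eq_laplacian x t := by
    simp only [deriv_comp_add_const]
    exact hu.deriv_deriv_eq_laplacian x (t + s)

theorem energyDensity_linearCombination_le (hu : IsFreeWave u) (hv : IsFreeWave v) (α β : ℝ)
    (x : E) (t : ℝ) : energyDensity (fun x t => α * u x t + β * v x t) x t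
      ≤ 2 * α ^ 2 * energyDensity u x t + 2 * β ^ 2 * energyDensity v x t := by
  simp only [energyDensity, hu.gradient_linearCombination hv, hu.deriv_linearCombination hv]
  have hgrad := parallelogram_law_with_norm ℝ (α • ∇ (fun y => u y t) x) (β • ∇ (fun y => v y t) x)
  simp only [norm_smul, mul_pow, Real.norm_eq_abs, sq_abs] at hgrad
  linarith [sq_nonneg ‖α • ∇ (fun y => u y t) x - β • ∇ (fun y => v y t) x‖,
    sq_nonneg (α * deriv (u x) t - β * deriv (v x) t)]

end IsFreeWave

/-! ### Conservation of energy -/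

namespace IsFreeWave

theorem contDiff_energyFlux (hu : IsFreeWave u) (t : ℝ) : ContDiff ℝ 1 fun x => energyFlux u x t :=
  (contDiff_const.mul (hu.contDiff_deriv_space t)).smul (hu.contDiff_gradient_space t)

theorem hasDerivAt_energyDensity (hu : IsFreeWave u) (x : E) (t : ℝ) :
    HasDerivAt (energyDensity u x) (2 * ⟪∇ (fun y => u y t) x, ∇ (fun y => deriv (u y) t) x⟫
      + 2 * deriv (u x) t * Δ (fun y => u y t) x) t := by
  refine ((hu.hasDerivAt_gradient x t).norm_sq.fun_add
    ((hu.hasDerivAt_deriv x t).fun_pow 2)).congr_deriv ?_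
  push_cast
  ring

theorem divergence_energyFlux (hu : IsFreeWave u) (x : E) (t : ℝ) :
    divergence (fun y => energyFlux u y t) x
      = 2 * ⟪∇ (fun y => u y t) x, ∇ (fun y => deriv (u y) t) x⟫
        + 2 * deriv (u x) t * Δ (fun y => u y t) x := by
  unfold energyFlux
  rw [divergence_smul (F := ∇ (fun y => u y t))
    (hasGradientAt_const_mul 2 (hu.hasGradientAt_deriv x t))
    ((hu.contDiff_gradient_space t).differentiable one_ne_zero x),
    divergence_gradient (hu.contDiff_space t), real_inner_smul_left, real_inner_comm, add_comm]

theorem localBalanceOn_energyDensity (hu : IsFreeWave u) (I : Set ℝ) :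
    LocalBalanceOn I (energyDensity u) (energyFlux u) 0 where
  contDiff_density := hu.contDiff_energyDensity
  contDiff_flux := hu.contDiff_energyFlux
  continuous_source _ := continuous_const
  deriv_le t _ x := by
    rw [(hu.hasDerivAt_energyDensity x t).deriv, hu.divergence_energyFlux, Pi.zero_apply,
      Pi.zero_apply, add_zero]

theorem localBalanceOn_neg_energyDensity (hu : IsFreeWave u) (I : Set ℝ) :
    LocalBalanceOn I (fun x t => -energyDensity u x t) (fun x t => (-1 : ℝ) • energyFlux u x t)
      0 where
  contDiff_density := hu.contDiff_energyDensity.neg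
  contDiff_flux t := contDiff_const.smul (hu.contDiff_energyFlux t)
  continuous_source _ := continuous_const
  deriv_le t _ x := by
    rw [(hu.hasDerivAt_energyDensity x t).fun_neg.deriv,
      divergence_smul (hasGradientAt_const x (-1))
        ((hu.contDiff_energyFlux t).differentiable one_ne_zero x), hu.divergence_energyFlux]
    simp

theorem hasDerivAt_localDensity (hu : IsFreeWave u) (x : E) (t : ℝ) :
    HasDerivAt (localDensity u x) (weight x ^ 8 * (divergence (fun y => energyFlux u y t) x
      + 2 * u x t * deriv (u x) t)) t := by
  rw [hu.divergence_energyFlux]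
  refine (((hu.hasDerivAt_energyDensity x t).fun_add ((hu.hasDerivAt x t).fun_pow 2)).const_mul
    (weight x ^ 8)).congr_deriv ?_
  push_cast
  ring

theorem divergence_weight_pow_smul_energyFlux (hu : IsFreeWave u) (x : E) (t : ℝ) :
    divergence (fun y => weight y ^ 8 • energyFlux u y t) x
      = weight x ^ 8 * divergence (fun y => energyFlux u y t) x
        - 8 * weight x ^ 10 * ⟪x, energyFlux u x t⟫ := by
  rw [divergence_smul (hasGradientAt_weight_pow 8 x)
    ((hu.contDiff_energyFlux t).differentiable one_ne_zero x), real_inner_smul_left]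
  push_cast
  ring

theorem localBalanceOn_localDensity (hu : IsFreeWave u) (I : Set ℝ) :
    LocalBalanceOn I (localDensity u) (fun x t => weight x ^ 8 • energyFlux u x t)
      (fun x t => 9 * hardyDensity u x t) where
  contDiff_density := hu.contDiff_localDensity
  contDiff_flux t := (contDiff_weight.pow 8).smul (hu.contDiff_energyFlux t)
  continuous_source t := continuous_const.mul (hu.continuous_hardyDensity t)
  deriv_le t _ x := by
    rw [(hu.hasDerivAt_localDensity x t).deriv, hu.divergence_weight_pow_smul_energyFlux]
    have hg := weight_pos x
    have hg₁ := weight_le_one x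
    have hflux : weight x ^ 10 * ⟪x, energyFlux u x t⟫ ≤ energyDensity u x t :=
      calc weight x ^ 10 * ⟪x, energyFlux u x t⟫
          ≤ weight x ^ 10 * (‖x‖ * ‖energyFlux u x t‖) := by
            gcongr
            exact real_inner_le_norm _ _
        _ = weight x ^ 9 * (weight x * ‖x‖) * ‖energyFlux u x t‖ := by ring
        _ ≤ 1 * 1 * energyDensity u x t := by
            gcongr
            · exact pow_le_one₀ hg.le hg₁
            · exact weight_mul_norm_le_one x
            · exact norm_energyFlux_le u x t
        _ = energyDensity u x t := by ring
    have hcross : weight x ^ 8 * (2 * u x t * deriv (u x) t) ≤ hardyDensity u x t :=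
      calc weight x ^ 8 * (2 * u x t * deriv (u x) t)
          = weight x ^ 7 * (2 * (weight x * u x t) * deriv (u x) t) := by ring
        _ ≤ weight x ^ 7 * ((weight x * u x t) ^ 2 + deriv (u x) t ^ 2) := by
            gcongr
            exact two_mul_le_add_sq _ _
        _ ≤ 1 * ((weight x * u x t) ^ 2 + deriv (u x) t ^ 2) := by
            gcongr
            exact pow_le_one₀ hg.le hg₁
        _ ≤ hardyDensity u x t := by
            rw [hardyDensity]
            linarith [sq_deriv_le_energyDensity u x t, mul_pow (weight x) (u x t) 2]
    linarith [energyDensity_le_hardyDensity u x t]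

end IsFreeWave

end FreeWaves

section FiniteEnergy

variable {E : Type*} [NormedAddCommGroup E] [InnerProductSpace ℝ E] [FiniteDimensional ℝ E]
  [MeasurableSpace E] [BorelSpace E] {u v : E → ℝ → ℝ} {K K' : ℝ}

/-- A free wave whose energy is bounded by `K` and which lies in the Hardy space. -/
structure IsFiniteEnergyWave (u : E → ℝ → ℝ) (K : ℝ) : Prop extends IsFreeWave u where
  integralBoundedOn_energyDensity : IntegralBoundedOn Set.univ (energyDensity u) K
  integrable_weight_sq_mul_sq : ∀ t, Integrable fun x => weight x ^ 2 * u x t ^ 2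

namespace IsFreeWave

theorem integrable_norm_gradient_sq (hu : IsFreeWave u) {t : ℝ}
    (hE : Integrable fun x => energyDensity u x t) :
    Integrable fun x => ‖∇ (fun y => u y t) x‖ ^ 2 :=
  hE.mono' ((hu.contDiff_gradient_space t).continuous.norm.pow 2).aestronglyMeasurable <|
    Eventually.of_forall fun x => by
      simpa using sq_norm_gradient_le_energyDensity u x t

theorem integrable_deriv_sq (hu : IsFreeWave u) {t : ℝ}
    (hE : Integrable fun x => energyDensity u x t) : Integrable fun x => deriv (u x) t ^ 2 :=
  hE.mono' ((hu.contDiff_deriv_space t).continuous.pow 2).aestronglyMeasurable <|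
    Eventually.of_forall fun x => by
      simpa using sq_deriv_le_energyDensity u x t

end IsFreeWave

namespace IsFiniteEnergyWave

theorem integrable_energyDensity (hu : IsFiniteEnergyWave u K) (t : ℝ) :
    Integrable fun x => energyDensity u x t :=
  (hu.integralBoundedOn_energyDensity t (Set.mem_univ t)).1

theorem integral_energyDensity_le (hu : IsFiniteEnergyWave u K) (t : ℝ) :
    ∫ x, energyDensity u x t ≤ K :=
  (hu.integralBoundedOn_energyDensity t (Set.mem_univ t)).2

theorem bound_nonneg (hu : IsFiniteEnergyWave u K) : 0 ≤ K :=
  (integral_nonneg fun x => energyDensity_nonneg u x 0).trans (hu.integral_energyDensity_le 0)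

theorem mono (hu : IsFiniteEnergyWave u K) (hK : K ≤ K') : IsFiniteEnergyWave u K' where
  toIsFreeWave := hu.toIsFreeWave
  integralBoundedOn_energyDensity t ht := (hu.integralBoundedOn_energyDensity t ht).imp_right
    (·.trans hK)
  integrable_weight_sq_mul_sq := hu.integrable_weight_sq_mul_sq

theorem integrable_sq_div_norm_sq (hdim : 2 < Module.finrank ℝ E) (hu : IsFiniteEnergyWave u K)
    (t : ℝ) : Integrable fun x => u x t ^ 2 / ‖x‖ ^ 2 :=
  (hardy_inequality hdim ((hu.contDiff_space t).of_le one_le_two)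
    (hu.integrable_weight_sq_mul_sq t)
    (hu.integrable_norm_gradient_sq (hu.integrable_energyDensity t))).1

theorem integral_sq_div_norm_sq_le (hdim : 2 < Module.finrank ℝ E) (hu : IsFiniteEnergyWave u K)
    (t : ℝ) : ∫ x, u x t ^ 2 / ‖x‖ ^ 2 ≤ 4 * K := by
  have hgrad := hu.integrable_norm_gradient_sq (hu.integrable_energyDensity t)
  refine (integral_sq_div_norm_sq_le_four_mul hdim ((hu.contDiff_space t).of_le one_le_two)
    (hu.integrable_weight_sq_mul_sq t) hgrad).trans ?_
  gcongr
  exact (integral_mono hgrad (hu.integrable_energyDensity t)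
    fun x => sq_norm_gradient_le_energyDensity u x t).trans (hu.integral_energyDensity_le t)

theorem integralBoundedOn_hardyDensity (hdim : 2 < Module.finrank ℝ E)
    (hu : IsFiniteEnergyWave u K) (I : Set ℝ) : IntegralBoundedOn I (hardyDensity u) (5 * K) := by
  intro t _
  have : Nontrivial E := Module.nontrivial_of_finrank_pos (R := ℝ) (by omega)
  have hE := hu.integrable_energyDensity t
  have hW := hu.integrable_weight_sq_mul_sq t
  refine ⟨hE.add hW, ?_⟩
  calc ∫ x, hardyDensity u x t
      = (∫ x, energyDensity u x t) + ∫ x, weight x ^ 2 * u x t ^ 2 := integral_add hE hW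
    _ ≤ K + ∫ x, u x t ^ 2 / ‖x‖ ^ 2 :=
        add_le_add (hu.integral_energyDensity_le t) <|
          integral_mono_ae hW (hu.integrable_sq_div_norm_sq hdim t) <|
            ae_ne_zero.mono fun x hx => weight_sq_mul_le_div_norm_sq hx (u x t)
    _ ≤ 5 * K := by linarith [hu.integral_sq_div_norm_sq_le hdim t]

theorem integrable_hardyDensity (hu : IsFiniteEnergyWave u K) (t : ℝ) :
    Integrable fun x => hardyDensity u x t :=
  (hu.integrable_energyDensity t).add (hu.integrable_weight_sq_mul_sq t)

theorem integrable_localDensity (hu : IsFiniteEnergyWave u K) (t : ℝ) :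
    Integrable fun x => localDensity u x t :=
  (hu.integrable_hardyDensity t).mono' (hu.continuous_localDensity t).aestronglyMeasurable <|
    Eventually.of_forall fun x => by
      rw [Real.norm_of_nonneg (localDensity_nonneg u x t)]
      exact localDensity_le_hardyDensity u x t

theorem integral_energyDensity_eq_of_le (hu : IsFiniteEnergyWave u K) {t₁ t₂ : ℝ}
    (h12 : t₁ ≤ t₂) : ∫ x, energyDensity u x t₁ = ∫ x, energyDensity u x t₂ := by
  have hE : IntegralBoundedOn (Set.Icc t₁ t₂) (energyDensity u) K := fun t _ =>
    hu.integralBoundedOn_energyDensity t (Set.mem_univ t)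
  have hle := (hu.localBalanceOn_energyDensity (Set.Icc t₁ t₂)).integral_sub_le h12 hE (γ := 0)
    (fun t _ x => norm_energyFlux_le u x t) (fun _ _ => by simp) (fun _ _ _ => le_rfl)
    (hu.integrable_energyDensity t₁) (hu.integrable_energyDensity t₂)
  have hge := (hu.localBalanceOn_neg_energyDensity (Set.Icc t₁ t₂)).integral_sub_le h12 hE (γ := 0)
    (fun t _ x => by simpa using norm_energyFlux_le u x t) (fun _ _ => by simp)
    (fun _ _ _ => le_rfl) (hu.integrable_energyDensity t₁).neg (hu.integrable_energyDensity t₂).neg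
  rw [integral_neg, integral_neg] at hge
  linarith

theorem integral_energyDensity_eq (hu : IsFiniteEnergyWave u K) (t₁ t₂ : ℝ) :
    ∫ x, energyDensity u x t₁ = ∫ x, energyDensity u x t₂ :=
  (le_total t₁ t₂).elim hu.integral_energyDensity_eq_of_le
    fun h => (hu.integral_energyDensity_eq_of_le h).symm

theorem translate (hu : IsFiniteEnergyWave u K) (s : ℝ) :
    IsFiniteEnergyWave (fun x t => u x (t + s)) K where
  toIsFreeWave := hu.toIsFreeWave.translate s
  integralBoundedOn_energyDensity t _ := by
    simpa only [energyDensity_translate] using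
      hu.integralBoundedOn_energyDensity (t + s) (Set.mem_univ _)
  integrable_weight_sq_mul_sq t := hu.integrable_weight_sq_mul_sq (t + s)

theorem linearCombination (hu : IsFiniteEnergyWave u K) (hv : IsFiniteEnergyWave v K') (α β : ℝ) :
    IsFiniteEnergyWave (fun x t => α * u x t + β * v x t) (2 * α ^ 2 * K + 2 * β ^ 2 * K') := by
  have hw := hu.toIsFreeWave.linearCombination hv.toIsFreeWave α β
  refine ⟨hw, fun t _ => ?_, fun t => ?_⟩
  · have hle := hu.energyDensity_linearCombination_le hv.toIsFreeWave α β (t := t)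
    have hu_int := (hu.integrable_energyDensity t).const_mul (2 * α ^ 2)
    have hv_int := (hv.integrable_energyDensity t).const_mul (2 * β ^ 2)
    have hint := (hu_int.add hv_int).mono' (hw.continuous_energyDensity t).aestronglyMeasurable <|
      Eventually.of_forall fun x => by
        rw [Real.norm_of_nonneg (energyDensity_nonneg _ x t)]
        exact hle x
    refine ⟨hint, (integral_mono hint (hu_int.add hv_int) hle).trans ?_⟩
    rw [integral_add' hu_int hv_int, integral_const_mul, integral_const_mul]
    gcongr
    · exact hu.integral_energyDensity_le t
    · exact hv.integral_energyDensity_le t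
  · refine (((hu.integrable_weight_sq_mul_sq t).const_mul (2 * α ^ 2)).add
      ((hv.integrable_weight_sq_mul_sq t).const_mul (2 * β ^ 2))).mono'
      ((continuous_weight.pow 2).mul ((hw.continuous_space t).pow 2)).aestronglyMeasurable <|
      Eventually.of_forall fun x => ?_
    rw [Real.norm_of_nonneg (by positivity)]
    simp only [Pi.add_apply]
    linarith [mul_nonneg (sq_nonneg (weight x)) (sq_nonneg (α * u x t - β * v x t))]

end IsFiniteEnergyWave

end FiniteEnergy

/-! ### Square integrability of time increments -/

section TimeIncrements

variable {E : Type*} [NormedAddCommGroup E] [InnerProductSpace ℝ E] [FiniteDimensional ℝ E]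
  {u : E → ℝ → ℝ} {K : ℝ}

namespace IsFreeWave

theorem localBalanceOn_sq_sub (hu : IsFreeWave u) (t₁ : ℝ) (I : Set ℝ) :
    LocalBalanceOn I (fun x t => exp (t₁ - t) * (u x t - u x t₁) ^ 2) 0
      (fun x t => exp (t₁ - t) * deriv (u x) t ^ 2) where
  contDiff_density := by
    have hu₁ := hu.contDiff.of_le one_le_two
    have hu₀ : ContDiff ℝ 1 fun p : E × ℝ => u p.1 t₁ :=
      hu₁.comp (by fun_prop : ContDiff ℝ 1 fun p : E × ℝ => (p.1, t₁))
    exact ((contDiff_const.sub contDiff_snd).exp).mul ((hu₁.sub hu₀).pow 2)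
  contDiff_flux _ := contDiff_const
  continuous_source t := continuous_const.mul ((hu.contDiff_deriv_space t).continuous.pow 2)
  deriv_le t _ x := by
    rw [((((hasDerivAt_id' t).const_sub t₁).exp).fun_mul
      (((hu.hasDerivAt x t).sub_const (u x t₁)).fun_pow 2)).deriv]
    have hdiv : divergence (fun _ : E => (0 : E)) x = 0 := by simp [divergence]
    simp only [Pi.zero_apply, hdiv]
    push_cast
    linarith [mul_nonneg (exp_pos (t₁ - t)).le
      (sq_nonneg (u x t - u x t₁ - deriv (u x) t))]

variable [MeasurableSpace E] [BorelSpace E]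

theorem integrable_and_integral_sq_sub_le (hu : IsFreeWave u)
    (hE : IntegralBoundedOn Set.univ (energyDensity u) K) {t₁ t₂ : ℝ} (h12 : t₁ ≤ t₂) :
    Integrable (fun x => (u x t₂ - u x t₁) ^ 2) ∧
      ∫ x, (u x t₂ - u x t₁) ^ 2 ≤ exp (t₂ - t₁) * (K * (t₂ - t₁)) := by
  have hsource : IntegralBoundedOn (Set.Icc t₁ t₂)
      (fun x t => exp (t₁ - t) * deriv (u x) t ^ 2) K := fun t ht => by
    obtain ⟨hint, hle⟩ := hE t (Set.mem_univ t)
    have hint' := (hu.integrable_deriv_sq hint).const_mul (exp (t₁ - t))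
    refine ⟨hint', (integral_mono hint' hint fun x => ?_).trans hle⟩
    exact (mul_le_of_le_one_left (sq_nonneg _) (exp_le_one_iff.2 (by linarith [ht.1]))).trans
      (sq_deriv_le_energyDensity u x t)
  obtain ⟨hint, hle⟩ := (hu.localBalanceOn_sq_sub t₁ _).integrable_and_integral_le h12
    (H := 0) (K := 0) (fun _ _ => by simp) (fun _ _ _ => by simp) hsource
    (fun _ _ _ => by positivity) (fun _ _ => by positivity) (by simp)
  have hexp : exp (t₂ - t₁) * exp (t₁ - t₂) = 1 := by
    rw [← exp_add, sub_add_sub_cancel', sub_self, exp_zero]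
  constructor
  · simpa only [← mul_assoc, hexp, one_mul] using hint.const_mul (exp (t₂ - t₁))
  · have hle' := mul_le_mul_of_nonneg_left hle (exp_pos (t₂ - t₁)).le
    rw [integral_const_mul, ← mul_assoc, hexp] at hle'
    simpa using hle'

theorem integrable_sq_sub (hu : IsFreeWave u)
    (hE : IntegralBoundedOn Set.univ (energyDensity u) K) (t₁ t₂ : ℝ) :
    Integrable fun x => (u x t₂ - u x t₁) ^ 2 := by
  rcases le_total t₁ t₂ with h | h
  · exact (hu.integrable_and_integral_sq_sub_le hE h).1
  · simpa only [sub_sq_comm] using (hu.integrable_and_integral_sq_sub_le hE h).1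

theorem isFiniteEnergyWave (hu : IsFreeWave u)
    (hE : IntegralBoundedOn Set.univ (energyDensity u) K) {t₀ : ℝ}
    (h₀ : Integrable fun x => weight x ^ 2 * u x t₀ ^ 2) : IsFiniteEnergyWave u K := by
  refine ⟨hu, hE, fun t => ?_⟩
  refine ((h₀.const_mul 2).add ((hu.integrable_sq_sub hE t₀ t).const_mul 2)).mono'
    ((continuous_weight.pow 2).mul ((hu.continuous_space t).pow 2)).aestronglyMeasurable <|
    Eventually.of_forall fun x => ?_
  have hg : weight x ^ 2 ≤ 1 := pow_le_one₀ (weight_pos x).le (weight_le_one x)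
  rw [Real.norm_of_nonneg (by positivity)]
  calc weight x ^ 2 * u x t ^ 2
      ≤ weight x ^ 2 * (2 * u x t₀ ^ 2 + 2 * (u x t - u x t₀) ^ 2) := by
        gcongr
        linarith [sq_nonneg (u x t - 2 * u x t₀)]
    _ ≤ 2 * (weight x ^ 2 * u x t₀ ^ 2) + 2 * (u x t - u x t₀) ^ 2 := by
        linarith [mul_le_mul_of_nonneg_right hg (sq_nonneg (u x t - u x t₀))]

end IsFreeWave

end TimeIncrements

/-! ### The Morawetz multiplier -/

section MorawetzCoefficients

variable {E : Type*} [NormedAddCommGroup E] {n c : ℝ}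

/-- The zeroth order coefficient of the Morawetz multiplier in dimension `n`. The first term is
`½ div (⟨x⟩⁻¹ x)` to leading order; the last, with `c` small, leaves a positive multiple of the
local energy in the Morawetz identity. -/
noncomputable def morawetzCoeff (n c : ℝ) (x : E) : ℝ :=
  (n - 1) / 2 * weight x + 1 / 2 * weight x ^ 3 - c * weight x ^ 5

/-- The function `q₁` with `∇q = q₁ x` for `q = morawetzCoeff n c`. -/
noncomputable def morawetzCoeffDeriv (n c : ℝ) (x : E) : ℝ :=
  -((n - 1) / 2 * weight x ^ 3) - 3 / 2 * weight x ^ 5 + 5 * c * weight x ^ 7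

/-- The function `q₂` with `∇q₁ = q₂ x` for `q₁ = morawetzCoeffDeriv n c`. -/
noncomputable def morawetzCoeffDeriv₂ (n c : ℝ) (x : E) : ℝ :=
  3 * (n - 1) / 2 * weight x ^ 5 + 15 / 2 * weight x ^ 7 - 35 * c * weight x ^ 9

theorem pos_of_mul_eq_one_fifth (hn : 3 ≤ n) (hcn : c * n = 1 / 5) : 0 < c := by
  by_contra! hneg
  nlinarith

theorem le_of_mul_eq_one_fifth (hn : 3 ≤ n) (hcn : c * n = 1 / 5) : c ≤ 1 / 15 := by
  nlinarith [pos_of_mul_eq_one_fifth hn hcn]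

theorem abs_morawetzCoeff_le (hn : 3 ≤ n) (hc₀ : 0 ≤ c) (hc₁ : c ≤ 1) (x : E) :
    |morawetzCoeff n c x| ≤ n * weight x := by
  have hg := weight_pos x
  have h₃ : weight x ^ 3 ≤ weight x := pow_le_of_le_one hg.le (weight_le_one x) three_ne_zero
  have h₅ : weight x ^ 5 ≤ weight x := pow_le_of_le_one hg.le (weight_le_one x) (by norm_num)
  have : 0 ≤ weight x ^ 3 := by positivity
  have : 0 ≤ weight x ^ 5 := by positivity
  rw [morawetzCoeff, abs_le]
  constructor <;> nlinarith

theorem abs_morawetzCoeffDeriv_le (hn : 3 ≤ n) (hc₀ : 0 ≤ c) (hc₁ : c ≤ 1) (x : E) :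
    |morawetzCoeffDeriv n c x| ≤ (n + 5) * weight x ^ 3 := by
  have hg := (weight_pos x).le
  have h₅ : weight x ^ 5 ≤ weight x ^ 3 := pow_le_pow_of_le_one hg (weight_le_one x) (by norm_num)
  have h₇ : weight x ^ 7 ≤ weight x ^ 3 := pow_le_pow_of_le_one hg (weight_le_one x) (by norm_num)
  have : 0 ≤ weight x ^ 3 := by positivity
  have : 0 ≤ weight x ^ 5 := by positivity
  have : 0 ≤ weight x ^ 7 := by positivity
  rw [morawetzCoeffDeriv, abs_le]
  constructor <;> nlinarith

theorem abs_morawetzCoeffDeriv_mul_norm_le (hn : 3 ≤ n) (hc₀ : 0 ≤ c) (hc₁ : c ≤ 1) (x : E) :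
    |morawetzCoeffDeriv n c x| * ‖x‖ ≤ (n + 5) * weight x ^ 2 :=
  calc |morawetzCoeffDeriv n c x| * ‖x‖ ≤ (n + 5) * weight x ^ 3 * ‖x‖ := by
        gcongr
        exact abs_morawetzCoeffDeriv_le hn hc₀ hc₁ x
    _ = (n + 5) * weight x ^ 2 * (weight x * ‖x‖) := by ring
    _ ≤ (n + 5) * weight x ^ 2 :=
        mul_le_of_le_one_right (by positivity) (weight_mul_norm_le_one x)

theorem abs_half_mul_weight_mul_sub_mul_norm_le (x : E) (a b : ℝ) :
    |1 / 2 * weight x * (a ^ 2 - b ^ 2)| * ‖x‖ ≤ 1 / 2 * (a ^ 2 + b ^ 2) := by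
  have hg := (weight_pos x).le
  calc |1 / 2 * weight x * (a ^ 2 - b ^ 2)| * ‖x‖
      = 1 / 2 * (weight x * ‖x‖) * |a ^ 2 - b ^ 2| := by
        rw [abs_mul, abs_of_nonneg (by positivity)]
        ring
    _ ≤ 1 / 2 * 1 * (a ^ 2 + b ^ 2) := by
        gcongr
        · exact weight_mul_norm_le_one x
        · exact abs_sub_le_of_nonneg_of_le (sq_nonneg a) (by linarith [sq_nonneg b])
            (sq_nonneg b) (by linarith [sq_nonneg a])
    _ = 1 / 2 * (a ^ 2 + b ^ 2) := by ring

theorem abs_half_mul_morawetzCoeffDeriv_mul_sq_mul_norm_le (hn : 3 ≤ n) (hc₀ : 0 ≤ c)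
    (hc₁ : c ≤ 1) (x : E) (a : ℝ) :
    |1 / 2 * morawetzCoeffDeriv n c x * a ^ 2| * ‖x‖
      ≤ 1 / 2 * (n + 5) * (weight x ^ 2 * a ^ 2) :=
  calc |1 / 2 * morawetzCoeffDeriv n c x * a ^ 2| * ‖x‖
      = 1 / 2 * (|morawetzCoeffDeriv n c x| * ‖x‖) * a ^ 2 := by
        rw [abs_mul, abs_mul, abs_of_nonneg (sq_nonneg a), abs_of_pos one_half_pos]
        ring
    _ ≤ 1 / 2 * ((n + 5) * weight x ^ 2) * a ^ 2 := by
        gcongr ?_ * ?_ * _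
        exact abs_morawetzCoeffDeriv_mul_norm_le hn hc₀ hc₁ x
    _ = 1 / 2 * (n + 5) * (weight x ^ 2 * a ^ 2) := by ring

theorem half_mul_divergence_weight_smul_eq (n c : ℝ) (x : E) :
    1 / 2 * (n * weight x - ‖x‖ ^ 2 * weight x ^ 3) = morawetzCoeff n c x + c * weight x ^ 5 := by
  rw [morawetzCoeff]
  linear_combination -1 / 2 * norm_sq_mul_weight_pow_add_two x 1

/-- The right-hand side is `-½ Δq` for `q = morawetzCoeff n c` in dimension `n`. -/
theorem const_mul_weight_pow_le_neg_half_mul (hn : 3 ≤ n) (hcn : c * n = 1 / 5) (x : E) :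
    c * weight x ^ 8
      ≤ -(1 / 2 * (n * morawetzCoeffDeriv n c x + ‖x‖ ^ 2 * morawetzCoeffDeriv₂ n c x)) := by
  have hg := (weight_pos x).le
  have hc₀ := (pos_of_mul_eq_one_fifth hn hcn).le
  have hc₁ := le_of_mul_eq_one_fifth hn hcn
  have h₃ : 0 ≤ (n - 1) * (n - 3) / 4 * weight x ^ 3 :=
    mul_nonneg (div_nonneg (mul_nonneg (by linarith) (by linarith)) (by norm_num)) (by positivity)
  have h₅ : 0 ≤ (3 * n - 9) / 2 * weight x ^ 5 := mul_nonneg (by linarith) (by positivity)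
  have h₇ : c * weight x ^ 8 + 35 / 2 * c * weight x ^ 9
      ≤ c * weight x ^ 7 + 35 / 2 * c * weight x ^ 7 := by
    gcongr ?_ * ?_ + ?_ * ?_
    · exact pow_le_pow_of_le_one hg (weight_le_one x) (by norm_num)
    · exact pow_le_pow_of_le_one hg (weight_le_one x) (by norm_num)
  have hc : c * weight x ^ 7 ≤ 13 / 4 * weight x ^ 7 := by gcongr; linarith
  calc c * weight x ^ 8 ≤ (n - 1) * (n - 3) / 4 * weight x ^ 3 + (3 * n - 9) / 2 * weight x ^ 5
        + (13 / 4 + 35 / 2 * c) * weight x ^ 7 - 35 / 2 * c * weight x ^ 9 := by linarith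
    _ = _ := by
        rw [morawetzCoeffDeriv, morawetzCoeffDeriv₂]
        linear_combination 3 * (n - 1) / 4 * norm_sq_mul_weight_pow_add_two x 3
          + 15 / 4 * norm_sq_mul_weight_pow_add_two x 5
          - 35 / 2 * c * norm_sq_mul_weight_pow_add_two x 7 + 5 / 2 * weight x ^ 7 * hcn

end MorawetzCoefficients

section Morawetz

variable {E : Type*} [NormedAddCommGroup E] [InnerProductSpace ℝ E]
  {f : E → ℝ} {n c : ℝ}

theorem weight_cube_mul_inner_sq_le (x v : E) :
    weight x ^ 3 * ⟪x, v⟫ ^ 2 ≤ (weight x - weight x ^ 3) * ‖v‖ ^ 2 := by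
  have hg := weight_pos x
  have hinner : ⟪x, v⟫ ^ 2 ≤ ‖x‖ ^ 2 * ‖v‖ ^ 2 := by
    rw [← mul_pow, ← sq_abs]
    exact pow_le_pow_left₀ (abs_nonneg _) (abs_real_inner_le_norm x v) 2
  calc weight x ^ 3 * ⟪x, v⟫ ^ 2 ≤ weight x ^ 3 * (‖x‖ ^ 2 * ‖v‖ ^ 2) := by gcongr
    _ = (weight x - weight x ^ 3) * ‖v‖ ^ 2 := by
        linear_combination ‖v‖ ^ 2 * norm_sq_mul_weight_pow_add_two x 1

theorem contDiff_morawetzCoeff (n c : ℝ) {k : WithTop ℕ∞} :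
    ContDiff ℝ k (morawetzCoeff n c : E → ℝ) :=
  ((contDiff_const.mul contDiff_weight).add (contDiff_const.mul (contDiff_weight.pow 3))).sub
    (contDiff_const.mul (contDiff_weight.pow 5))

theorem contDiff_morawetzCoeffDeriv (n c : ℝ) {k : WithTop ℕ∞} :
    ContDiff ℝ k (morawetzCoeffDeriv n c : E → ℝ) :=
  ((contDiff_const.mul (contDiff_weight.pow 3)).neg.sub
    (contDiff_const.mul (contDiff_weight.pow 5))).add (contDiff_const.mul (contDiff_weight.pow 7))

variable [CompleteSpace E]

theorem hasGradientAt_morawetzCoeff (n c : ℝ) (x : E) :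
    HasGradientAt (morawetzCoeff n c) (morawetzCoeffDeriv n c x • x) x := by
  have h := hasGradientAt_add (hasGradientAt_add
    (hasGradientAt_const_mul ((n - 1) / 2) (hasGradientAt_weight x))
    (hasGradientAt_const_mul (1 / 2) (hasGradientAt_weight_pow 3 x)))
    (hasGradientAt_const_mul (-c) (hasGradientAt_weight_pow 5 x))
  convert h using 1
  · funext y
    rw [morawetzCoeff]
    ring
  · simp only [smul_smul, ← add_smul, morawetzCoeffDeriv]
    congr 1
    push_cast
    ring

theorem hasGradientAt_morawetzCoeffDeriv (n c : ℝ) (x : E) :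
    HasGradientAt (morawetzCoeffDeriv n c) (morawetzCoeffDeriv₂ n c x • x) x := by
  have h := hasGradientAt_add (hasGradientAt_add
    (hasGradientAt_const_mul (-((n - 1) / 2)) (hasGradientAt_weight_pow 3 x))
    (hasGradientAt_const_mul (-(3 / 2)) (hasGradientAt_weight_pow 5 x)))
    (hasGradientAt_const_mul (5 * c) (hasGradientAt_weight_pow 7 x))
  convert h using 1
  · funext y
    rw [morawetzCoeffDeriv]
    ring
  · simp only [smul_smul, ← add_smul, morawetzCoeffDeriv₂]
    congr 1
    push_cast
    ring

/-- The Morawetz multiplier `⟨x⟩⁻¹ x·∇f + q f`. -/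
noncomputable def morawetzMultiplier (n c : ℝ) (f : E → ℝ) (x : E) : ℝ :=
  weight x * ⟪x, ∇ f x⟫ + morawetzCoeff n c x * f x

/-- The flux in the Morawetz identity, whose density is `∂ₜu` times the multiplier of `u`. -/
noncomputable def morawetzFlux (n c : ℝ) (u : E → ℝ → ℝ) (x : E) (t : ℝ) : E :=
  morawetzMultiplier n c (fun y => u y t) x • ∇ (fun y => u y t) x
    + (1 / 2 * weight x * (deriv (u x) t ^ 2 - ‖∇ (fun y => u y t) x‖ ^ 2)
      - 1 / 2 * morawetzCoeffDeriv n c x * u x t ^ 2) • x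

theorem hasGradientAt_inner_id_gradient (hf : ContDiff ℝ 2 f) (x : E) :
    HasGradientAt (fun y => ⟪y, ∇ f y⟫) (∇ f x + fderiv ℝ (∇ f) x x) x := by
  have hD := ((contDiff_gradient (n := 1) hf).differentiable one_ne_zero x).hasFDerivAt
  refine ((hasFDerivAt_id x).inner ℝ hD).congr_fderiv ?_
  ext v
  have hcomm : ⟪x, fderiv ℝ (∇ f) x v⟫ = ⟪fderiv ℝ (∇ f) x x, v⟫ :=
    (inner_fderiv_gradient_comm hf x x v).symm
  simpa [hcomm, inner_add_left] using add_comm _ _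

theorem hasGradientAt_norm_gradient_sq (hf : ContDiff ℝ 2 f) (x : E) :
    HasGradientAt (fun y => ‖∇ f y‖ ^ 2) ((2 : ℝ) • fderiv ℝ (∇ f) x (∇ f x)) x := by
  have hD := ((contDiff_gradient (n := 1) hf).differentiable one_ne_zero x).hasFDerivAt
  refine hD.norm_sq.congr_fderiv ?_
  ext v
  simp [inner_fderiv_gradient_comm hf]

theorem hasGradientAt_morawetzMultiplier (n c : ℝ) (hf : ContDiff ℝ 2 f) (x : E) :
    HasGradientAt (morawetzMultiplier n c f)
      (weight x • (∇ f x + fderiv ℝ (∇ f) x x) + ⟪x, ∇ f x⟫ • (-weight x ^ 3 • x)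
        + (morawetzCoeff n c x • ∇ f x + f x • morawetzCoeffDeriv n c x • x)) x :=
  hasGradientAt_add
    (hasGradientAt_mul (hasGradientAt_weight x) (hasGradientAt_inner_id_gradient hf x))
    (hasGradientAt_mul (hasGradientAt_morawetzCoeff n c x)
      (hf.differentiable two_ne_zero x).hasGradientAt)

theorem abs_morawetzMultiplier_le (hn : 3 ≤ n) (hc₀ : 0 ≤ c) (hc₁ : c ≤ 1) (x : E) :
    |morawetzMultiplier n c f x| ≤ ‖∇ f x‖ + n * (weight x * |f x|) := by
  have hg := (weight_pos x).le
  calc |morawetzMultiplier n c f x|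
      ≤ |weight x * ⟪x, ∇ f x⟫| + |morawetzCoeff n c x * f x| := abs_add_le _ _
    _ = weight x * |⟪x, ∇ f x⟫| + |morawetzCoeff n c x| * |f x| := by
        rw [abs_mul, abs_mul, abs_of_nonneg hg]
    _ ≤ weight x * (‖x‖ * ‖∇ f x‖) + n * weight x * |f x| := by
        gcongr
        · exact abs_real_inner_le_norm _ _
        · exact abs_morawetzCoeff_le hn hc₀ hc₁ x
    _ = (weight x * ‖x‖) * ‖∇ f x‖ + n * (weight x * |f x|) := by ring
    _ ≤ 1 * ‖∇ f x‖ + n * (weight x * |f x|) := by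
        gcongr
        exact weight_mul_norm_le_one x
    _ = ‖∇ f x‖ + n * (weight x * |f x|) := by rw [one_mul]

theorem sq_morawetzMultiplier_le (hn : 3 ≤ n) (hc₀ : 0 ≤ c) (hc₁ : c ≤ 1) (x : E) :
    morawetzMultiplier n c f x ^ 2 ≤ 2 * ‖∇ f x‖ ^ 2 + 2 * n ^ 2 * (weight x ^ 2 * f x ^ 2) := by
  have h := pow_le_pow_left₀ (abs_nonneg _) (abs_morawetzMultiplier_le (f := f) hn hc₀ hc₁ x) 2
  rw [sq_abs] at h
  calc morawetzMultiplier n c f x ^ 2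
      ≤ 2 * ‖∇ f x‖ ^ 2 + 2 * (n * (weight x * |f x|)) ^ 2 := by
        linarith [sq_nonneg (‖∇ f x‖ - n * (weight x * |f x|))]
    _ = 2 * ‖∇ f x‖ ^ 2 + 2 * n ^ 2 * (weight x ^ 2 * f x ^ 2) := by
        rw [mul_pow, mul_pow, sq_abs]
        ring

theorem abs_deriv_mul_morawetzMultiplier_le (hn : 3 ≤ n) (hc₀ : 0 ≤ c) (hc₁ : c ≤ 1)
    (u : E → ℝ → ℝ) (x : E) (t : ℝ) :
    |deriv (u x) t * morawetzMultiplier n c (fun y => u y t) x| ≤ n ^ 2 * hardyDensity u x t := by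
  have hsq := sq_morawetzMultiplier_le (f := fun y => u y t) hn hc₀ hc₁ x
  have hn' : 1 ≤ n ^ 2 := by nlinarith
  calc |deriv (u x) t * morawetzMultiplier n c (fun y => u y t) x|
      ≤ 1 / 2 * deriv (u x) t ^ 2 + 1 / 2 * morawetzMultiplier n c (fun y => u y t) x ^ 2 := by
        rw [abs_mul, ← sq_abs (deriv (u x) t), ← sq_abs (morawetzMultiplier n c _ x)]
        linarith [sq_nonneg (|deriv (u x) t| - |morawetzMultiplier n c (fun y => u y t) x|)]
    _ ≤ 1 * energyDensity u x t + n ^ 2 * (weight x ^ 2 * u x t ^ 2) := by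
        rw [energyDensity]
        linarith [sq_nonneg (deriv (u x) t)]
    _ ≤ n ^ 2 * hardyDensity u x t := by
        rw [hardyDensity, mul_add]
        gcongr
        exact energyDensity_nonneg u x t

theorem norm_morawetzFlux_le (hn : 3 ≤ n) (hc₀ : 0 ≤ c) (hc₁ : c ≤ 1) (u : E → ℝ → ℝ) (x : E)
    (t : ℝ) : ‖morawetzFlux n c u x t‖ ≤ (n ^ 2 + n + 5) * hardyDensity u x t := by
  have hsq := sq_morawetzMultiplier_le (f := fun y => u y t) hn hc₀ hc₁ x
  set m := morawetzMultiplier n c (fun y => u y t) x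
  set p := ∇ (fun y => u y t) x
  set h := deriv (u x) t
  have hmul : ‖m • p‖ ≤ 1 / 2 * (m ^ 2 + ‖p‖ ^ 2) := by
    rw [norm_smul, Real.norm_eq_abs, ← sq_abs m]
    linarith [sq_nonneg (|m| - ‖p‖)]
  have hsum : ‖morawetzFlux n c u x t‖ ≤ 1 / 2 * (m ^ 2 + ‖p‖ ^ 2) + 1 / 2 * (h ^ 2 + ‖p‖ ^ 2)
      + 1 / 2 * (n + 5) * (weight x ^ 2 * u x t ^ 2) := by
    refine (norm_add_le _ _).trans ?_
    rw [norm_smul _ x, Real.norm_eq_abs]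
    linarith [abs_half_mul_weight_mul_sub_mul_norm_le x h ‖p‖,
      abs_half_mul_morawetzCoeffDeriv_mul_sq_mul_norm_le hn hc₀ hc₁ x (u x t),
      mul_le_mul_of_nonneg_right (abs_sub (1 / 2 * weight x * (h ^ 2 - ‖p‖ ^ 2))
        (1 / 2 * morawetzCoeffDeriv n c x * u x t ^ 2)) (norm_nonneg x)]
  have hP : 0 ≤ weight x ^ 2 * u x t ^ 2 := by positivity
  have hn' : 0 ≤ n ^ 2 + n := by positivity
  rw [hardyDensity, energyDensity]
  nlinarith [mul_nonneg hn' (sq_nonneg h), mul_nonneg hn' (sq_nonneg ‖p‖),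
    mul_nonneg (show 0 ≤ n + 5 by linarith) hP, sq_nonneg ‖p‖, sq_nonneg h]

end Morawetz

section MorawetzBalance

variable {E : Type*} [NormedAddCommGroup E] [InnerProductSpace ℝ E] [FiniteDimensional ℝ E]
  {u : E → ℝ → ℝ} {n c : ℝ}

namespace IsFreeWave

theorem contDiff_morawetzMultiplier (hu : IsFreeWave u) (n c : ℝ) :
    ContDiff ℝ 1 (Function.uncurry fun x t => morawetzMultiplier n c (fun y => u y t) x) :=
  ((contDiff_weight.comp contDiff_fst).mul (contDiff_fst.inner ℝ hu.contDiff_gradient)).add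
    (((contDiff_morawetzCoeff n c).comp contDiff_fst).mul (hu.contDiff.of_le one_le_two))

theorem contDiff_morawetzFlux (hu : IsFreeWave u) (n c : ℝ) (t : ℝ) :
    ContDiff ℝ 1 fun x => morawetzFlux n c u x t := by
  have hgrad := hu.contDiff_gradient_space t
  exact (((hu.contDiff_morawetzMultiplier n c).comp (contDiff_prodMk_left t)).smul hgrad).add
    ((((contDiff_const.mul contDiff_weight).mul
      (((hu.contDiff_deriv_space t).pow 2).sub (hgrad.norm_sq ℝ))).sub
      ((contDiff_const.mul (contDiff_morawetzCoeffDeriv n c)).mul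
        (((hu.contDiff_space t).of_le one_le_two).pow 2))).smul contDiff_id)

theorem hasDerivAt_deriv_mul_morawetzMultiplier (hu : IsFreeWave u) (n c : ℝ) (x : E) (t : ℝ) :
    HasDerivAt (fun s => deriv (u x) s * morawetzMultiplier n c (fun y => u y s) x)
      (Δ (fun y => u y t) x * morawetzMultiplier n c (fun y => u y t) x
        + deriv (u x) t * (weight x * ⟪x, ∇ (fun y => deriv (u y) t) x⟫
          + morawetzCoeff n c x * deriv (u x) t)) t := by
  have hinner : HasDerivAt (fun s => ⟪x, ∇ (fun y => u y s) x⟫)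
      ⟪x, ∇ (fun y => deriv (u y) t) x⟫ t := by
    simpa only [inner_zero_left, add_zero] using
      (hasDerivAt_const t x).inner ℝ (hu.hasDerivAt_gradient x t)
  exact (hu.hasDerivAt_deriv x t).fun_mul
    ((hinner.const_mul _).fun_add ((hu.hasDerivAt x t).const_mul _))

theorem divergence_morawetzFlux (hu : IsFreeWave u) (n c : ℝ) (x : E) (t : ℝ) :
    divergence (fun y => morawetzFlux n c u y t) x
      = Δ (fun y => u y t) x * morawetzMultiplier n c (fun y => u y t) x
        + deriv (u x) t * weight x * ⟪x, ∇ (fun y => deriv (u y) t) x⟫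
        - weight x ^ 3 * ⟪x, ∇ (fun y => u y t) x⟫ ^ 2
        + (weight x + morawetzCoeff n c x) * ‖∇ (fun y => u y t) x‖ ^ 2
        + 1 / 2 * (Module.finrank ℝ E * weight x - ‖x‖ ^ 2 * weight x ^ 3)
          * (deriv (u x) t ^ 2 - ‖∇ (fun y => u y t) x‖ ^ 2)
        - 1 / 2 * (Module.finrank ℝ E * morawetzCoeffDeriv n c x
          + ‖x‖ ^ 2 * morawetzCoeffDeriv₂ n c x) * u x t ^ 2 := by
  have hf := hu.contDiff_space t
  have hD := (hu.contDiff_gradient_space t).differentiable one_ne_zero x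
  have hmul := hasGradientAt_morawetzMultiplier n c hf x
  have hscal := hasGradientAt_add
    (hasGradientAt_mul (hasGradientAt_const_mul (1 / 2) (hasGradientAt_weight x))
      (hasGradientAt_add (hasGradientAt_pow 2 (hu.hasGradientAt_deriv x t))
        (hasGradientAt_const_mul (-1) (hasGradientAt_norm_gradient_sq hf x))))
    (hasGradientAt_mul (hasGradientAt_const_mul (-(1 / 2)) (hasGradientAt_morawetzCoeffDeriv n c x))
      (hasGradientAt_pow 2 (hu.hasGradientAt x t)))
  have hflux : (fun y => morawetzFlux n c u y t) = fun y =>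
      morawetzMultiplier n c (fun y => u y t) y • ∇ (fun y => u y t) y
        + (1 / 2 * weight y * (deriv (u y) t ^ 2 + -1 * ‖∇ (fun y => u y t) y‖ ^ 2)
          + -(1 / 2) * morawetzCoeffDeriv n c y * u y t ^ 2) • y := by
    funext y
    rw [morawetzFlux]
    congr 2
    ring
  have hdiv : divergence (fun y => morawetzFlux n c u y t) x = _ :=
    (congrArg (divergence · x) hflux).trans <|
      (divergence_add (hmul.hasFDerivAt.differentiableAt.smul hD)
        (hscal.hasFDerivAt.differentiableAt.smul differentiableAt_fun_id)).trans
      (congrArg₂ (· + ·) (divergence_smul hmul hD) (divergence_smul hscal differentiableAt_fun_id))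
  rw [hdiv]
  simp only [divergence_gradient hf, divergence_id, inner_add_left, inner_add_right,
    real_inner_smul_left, real_inner_smul_right, inner_fderiv_gradient_comm hf x x,
    real_inner_self_eq_norm_sq, morawetzMultiplier, real_inner_comm x]
  push_cast
  ring

theorem deriv_deriv_mul_morawetzMultiplier_le (hu : IsFreeWave u) (hdim : 2 < Module.finrank ℝ E)
    (hc : c * Module.finrank ℝ E = 1 / 5) (x : E) (t : ℝ) :
    deriv (fun s => deriv (u x) s * morawetzMultiplier (Module.finrank ℝ E) c (fun y => u y s) x) t
      ≤ divergence (fun y => morawetzFlux (Module.finrank ℝ E) c u y t) x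
        - c * localDensity u x t := by
  rw [(hu.hasDerivAt_deriv_mul_morawetzMultiplier _ c x t).deriv, hu.divergence_morawetzFlux,
    half_mul_divergence_weight_smul_eq _ c, localDensity, energyDensity]
  have hn : (3 : ℝ) ≤ Module.finrank ℝ E := mod_cast hdim
  have hc₀ := (pos_of_mul_eq_one_fifth hn hc).le
  have hc₁ := le_of_mul_eq_one_fifth hn hc
  have hg := (weight_pos x).le
  set p := ∇ (fun y => u y t) x
  set a := deriv (u x) t
  have hradial := weight_cube_mul_inner_sq_le x p
  have hpot := mul_le_mul_of_nonneg_right (const_mul_weight_pow_le_neg_half_mul hn hc x)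
    (sq_nonneg (u x t))
  have hkin : c * weight x ^ 8 * a ^ 2 ≤ c * weight x ^ 5 * a ^ 2 := by
    gcongr ?_ * ?_ * _
    exact pow_le_pow_of_le_one hg (weight_le_one x) (by norm_num)
  have hgrad : (c * weight x ^ 5 + c * weight x ^ 8) * ‖p‖ ^ 2 ≤ weight x ^ 3 * ‖p‖ ^ 2 := by
    gcongr
    have h₅ : c * weight x ^ 5 ≤ 1 / 2 * weight x ^ 3 := mul_le_mul (by linarith)
      (pow_le_pow_of_le_one hg (weight_le_one x) (by norm_num)) (by positivity) (by norm_num)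
    have h₈ : c * weight x ^ 8 ≤ 1 / 2 * weight x ^ 3 := mul_le_mul (by linarith)
      (pow_le_pow_of_le_one hg (weight_le_one x) (by norm_num)) (by positivity) (by norm_num)
    linarith
  linarith

theorem localBalanceOn_morawetz (hu : IsFreeWave u) (hdim : 2 < Module.finrank ℝ E)
    (hc : c * Module.finrank ℝ E = 1 / 5) (I : Set ℝ) :
    LocalBalanceOn I
      (fun x t => deriv (u x) t * morawetzMultiplier (Module.finrank ℝ E) c (fun y => u y t) x)
      (morawetzFlux (Module.finrank ℝ E) c u) (fun x t => -(c * localDensity u x t)) where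
  contDiff_density := hu.contDiff_deriv.mul (hu.contDiff_morawetzMultiplier _ c)
  contDiff_flux := hu.contDiff_morawetzFlux _ c
  continuous_source t := (continuous_const.mul (hu.continuous_localDensity t)).neg
  deriv_le t _ x := hu.deriv_deriv_mul_morawetzMultiplier_le hdim hc x t

end IsFreeWave

end MorawetzBalance

/-! ### Decay of the local energy -/

theorem norm_smul_weight_pow_smul_energyFlux_le {E : Type*} [NormedAddCommGroup E]
    [InnerProductSpace ℝ E] [CompleteSpace E] {c t₁ t₂ t : ℝ} (hc₀ : 0 ≤ c)
    (ht : t ∈ Set.Icc t₁ t₂) (u : E → ℝ → ℝ) (x : E) :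
    ‖(c * (t - t₁)) • (weight x ^ 8 • energyFlux u x t)‖
      ≤ c * (t₂ - t₁) * hardyDensity u x t := by
  have h₁ : 0 ≤ t - t₁ := sub_nonneg.2 ht.1
  have h₂ : t ≤ t₂ := ht.2
  have h₁₂ : 0 ≤ t₂ - t₁ := by linarith
  have hw : 0 ≤ weight x := (weight_pos x).le
  rw [norm_smul, norm_smul, Real.norm_of_nonneg (by positivity),
    Real.norm_of_nonneg (by positivity)]
  gcongr
  exact (mul_le_of_le_one_left (norm_nonneg _) (pow_le_one₀ hw (weight_le_one x))).trans
    ((norm_energyFlux_le u x t).trans (energyDensity_le_hardyDensity u x t))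

section LocalEnergyDecay

variable {E : Type*} [NormedAddCommGroup E] [InnerProductSpace ℝ E] [FiniteDimensional ℝ E]
  {u : E → ℝ → ℝ} {K c : ℝ}

/-- The time factor is chosen so that the local densities in the two sources cancel. -/
theorem IsFreeWave.localBalanceOn_localDensity_add_morawetz (hdim : 2 < Module.finrank ℝ E)
    (hc : c * Module.finrank ℝ E = 1 / 5) (hu : IsFreeWave u) (t₁ t₂ : ℝ) :
    LocalBalanceOn (Set.Icc t₁ t₂)
      (fun x t => c * (t - t₁) * localDensity u x t
        + deriv (u x) t * morawetzMultiplier (Module.finrank ℝ E) c (fun y => u y t) x)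
      (fun x t => (c * (t - t₁)) • (weight x ^ 8 • energyFlux u x t)
        + morawetzFlux (Module.finrank ℝ E) c u x t)
      (fun x t => 9 * (c * (t₂ - t₁)) * hardyDensity u x t) := by
  have hc₀ := pos_of_mul_eq_one_fifth (mod_cast hdim) hc
  have hψ : ContDiff ℝ 1 fun t : ℝ => c * (t - t₁) := by fun_prop
  refine (((hu.localBalanceOn_localDensity _).time_mul hψ fun t ht =>
    mul_nonneg hc₀.le (sub_nonneg.2 ht.1)).add
    (hu.localBalanceOn_morawetz hdim hc _)).mono_source
    (fun t => continuous_const.mul (hu.continuous_hardyDensity t)) fun t ht x => ?_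
  have hderiv : deriv (fun s : ℝ => c * (s - t₁)) t = c := by simp
  have hle : c * (t - t₁) * hardyDensity u x t ≤ c * (t₂ - t₁) * hardyDensity u x t := by
    gcongr
    · exact hardyDensity_nonneg u x t
    · exact ht.2
  rw [hderiv]
  linarith

variable [MeasurableSpace E] [BorelSpace E]

/-- The space integral of the density in the Morawetz balance. -/
noncomputable def morawetzIntegral (c : ℝ) (u : E → ℝ → ℝ) (t : ℝ) : ℝ :=
  ∫ x, deriv (u x) t * morawetzMultiplier (Module.finrank ℝ E) c (fun y => u y t) x

namespace IsFiniteEnergyWave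

theorem integrable_deriv_mul_morawetzMultiplier (hdim : 2 < Module.finrank ℝ E)
    (hc : c * Module.finrank ℝ E = 1 / 5) (hu : IsFiniteEnergyWave u K) (t : ℝ) :
    Integrable fun x =>
      deriv (u x) t * morawetzMultiplier (Module.finrank ℝ E) c (fun y => u y t) x := by
  have hn : (3 : ℝ) ≤ Module.finrank ℝ E := mod_cast hdim
  have hc₀ := pos_of_mul_eq_one_fifth hn hc
  have hc₁ := (le_of_mul_eq_one_fifth hn hc).trans (by norm_num : (1 / 15 : ℝ) ≤ 1)
  exact ((hu.integrable_hardyDensity t).const_mul _).mono'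
    ((hu.localBalanceOn_morawetz hdim hc Set.univ).continuous_density t).aestronglyMeasurable
    (Eventually.of_forall fun x => abs_deriv_mul_morawetzMultiplier_le hn hc₀.le hc₁ u x t)

theorem abs_morawetzIntegral_le (hdim : 2 < Module.finrank ℝ E)
    (hc : c * Module.finrank ℝ E = 1 / 5) (hu : IsFiniteEnergyWave u K) (t : ℝ) :
    |morawetzIntegral c u t| ≤ Module.finrank ℝ E ^ 2 * (5 * K) := by
  have hn : (3 : ℝ) ≤ Module.finrank ℝ E := mod_cast hdim
  have hc₀ := pos_of_mul_eq_one_fifth hn hc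
  have hc₁ := (le_of_mul_eq_one_fifth hn hc).trans (by norm_num : (1 / 15 : ℝ) ≤ 1)
  obtain ⟨hint, hle⟩ := (hu.integralBoundedOn_hardyDensity hdim Set.univ).const_mul
    (sq_nonneg (Module.finrank ℝ E : ℝ)) t (Set.mem_univ t)
  rw [morawetzIntegral, ← Real.norm_eq_abs]
  exact (norm_integral_le_of_norm_le hint <| Eventually.of_forall fun x =>
    abs_deriv_mul_morawetzMultiplier_le hn hc₀.le hc₁ u x t).trans hle

theorem antitone_morawetzIntegral (hdim : 2 < Module.finrank ℝ E)
    (hc : c * Module.finrank ℝ E = 1 / 5) (hu : IsFiniteEnergyWave u K) :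
    Antitone (morawetzIntegral c u) := by
  intro t₁ t₂ h12
  have hn : (3 : ℝ) ≤ Module.finrank ℝ E := mod_cast hdim
  have hc₀ := pos_of_mul_eq_one_fifth hn hc
  have hc₁ := (le_of_mul_eq_one_fifth hn hc).trans (by norm_num : (1 / 15 : ℝ) ≤ 1)
  have hbalance := (hu.localBalanceOn_morawetz hdim hc (Set.Icc t₁ t₂)).mono_source (G' := 0)
    (fun _ => continuous_const)
    fun t _ x => neg_nonpos.2 (mul_nonneg hc₀.le (localDensity_nonneg u x t))
  have hle := hbalance.integral_sub_le h12 (γ := 0)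
    ((hu.integralBoundedOn_hardyDensity hdim _).const_mul
      (by positivity : (0 : ℝ) ≤ Module.finrank ℝ E ^ 2 + Module.finrank ℝ E + 5))
    (fun t _ x => norm_morawetzFlux_le hn hc₀.le hc₁ u x t) (fun _ _ => by simp)
    (fun _ _ _ => le_rfl) (hu.integrable_deriv_mul_morawetzMultiplier hdim hc t₁)
    (hu.integrable_deriv_mul_morawetzMultiplier hdim hc t₂)
  rwa [zero_mul, sub_nonpos] at hle

theorem exists_tendsto_morawetzIntegral (hdim : 2 < Module.finrank ℝ E)
    (hc : c * Module.finrank ℝ E = 1 / 5) (hu : IsFiniteEnergyWave u K) :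
    ∃ L, Tendsto (morawetzIntegral c u) atTop (nhds L) := by
  refine ⟨_, tendsto_atTop_ciInf (hu.antitone_morawetzIntegral hdim hc)
    ⟨-(Module.finrank ℝ E ^ 2 * (5 * K)), ?_⟩⟩
  rintro _ ⟨t, rfl⟩
  exact (abs_le.1 (hu.abs_morawetzIntegral_le hdim hc t)).1

theorem mul_integral_localDensity_le (hdim : 2 < Module.finrank ℝ E)
    (hc : c * Module.finrank ℝ E = 1 / 5) (hu : IsFiniteEnergyWave u K) {η : ℝ} (hη : 0 ≤ η)
    (t : ℝ) : c * η * ∫ x, localDensity u x t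
      ≤ morawetzIntegral c u (t - η) - morawetzIntegral c u t + c * η * (45 * K * η) := by
  have hn : (3 : ℝ) ≤ Module.finrank ℝ E := mod_cast hdim
  have hc₀ := pos_of_mul_eq_one_fifth hn hc
  have hc₁ := (le_of_mul_eq_one_fifth hn hc).trans (by norm_num : (1 / 15 : ℝ) ≤ 1)
  have ha : 0 ≤ c * η + (Module.finrank ℝ E ^ 2 + Module.finrank ℝ E + 5) := by positivity
  have hb : 0 ≤ 9 * (c * η) := by positivity
  have hbalance := hu.localBalanceOn_localDensity_add_morawetz hdim hc (t - η) t
  rw [sub_sub_cancel] at hbalance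
  have hH := hu.integralBoundedOn_hardyDensity hdim (Set.Icc (t - η) t)
  have hM := hu.integrable_deriv_mul_morawetzMultiplier hdim hc
  have hL (a s : ℝ) := (hu.integrable_localDensity s).const_mul a
  have hflux : ∀ s ∈ Set.Icc (t - η) t, ∀ x,
      ‖(c * (s - (t - η))) • (weight x ^ 8 • energyFlux u x s)
        + morawetzFlux (Module.finrank ℝ E) c u x s‖
      ≤ (c * η + (Module.finrank ℝ E ^ 2 + Module.finrank ℝ E + 5)) * hardyDensity u x s :=
    fun s hs x => by
      have hlocal := norm_smul_weight_pow_smul_energyFlux_le hc₀.le hs u x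
      rw [sub_sub_cancel] at hlocal
      exact (norm_add_le _ _).trans ((add_le_add hlocal
        (norm_morawetzFlux_le hn hc₀.le hc₁ u x s)).trans_eq (add_mul _ _ _).symm)
  have hle := hbalance.integral_sub_le (by linarith) (hH.const_mul ha) hflux (hH.const_mul hb)
    (fun s _ x => mul_nonneg hb (hardyDensity_nonneg u x s))
    ((hL _ _).add (hM _)) ((hL _ _).add (hM _))
  rw [integral_add (hL _ _) (hM _), integral_add (hL _ _) (hM _), integral_const_mul,
    integral_const_mul, sub_self, mul_zero, zero_mul, sub_sub_cancel] at hle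
  rw [morawetzIntegral, morawetzIntegral]
  linarith

theorem tendsto_integral_localDensity (hdim : 2 < Module.finrank ℝ E)
    (hu : IsFiniteEnergyWave u K) :
    Tendsto (fun t => ∫ x, localDensity u x t) atTop (nhds 0) := by
  obtain ⟨c, hc⟩ : ∃ c : ℝ, c * Module.finrank ℝ E = 1 / 5 :=
    ⟨1 / 5 / Module.finrank ℝ E, div_mul_cancel₀ _ (by positivity)⟩
  have hc₀ := pos_of_mul_eq_one_fifth (mod_cast hdim) hc
  obtain ⟨L, hL⟩ := hu.exists_tendsto_morawetzIntegral hdim hc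
  have hK := hu.bound_nonneg
  refine tendsto_order.2 ⟨fun a ha => Eventually.of_forall fun t =>
    ha.trans_le (integral_nonneg fun x => localDensity_nonneg u x t), fun ε hε => ?_⟩
  obtain ⟨η, hη, hηε⟩ : ∃ η > 0, 45 * K * η < ε / 2 := by
    refine ⟨ε / 2 / (45 * K + 1), by positivity, ?_⟩
    rw [mul_div_assoc', div_lt_iff₀ (by positivity)]
    linarith
  have hdiff : Tendsto (fun t => morawetzIntegral c u (t - η) - morawetzIntegral c u t) atTop
      (nhds 0) := by
    simpa [sub_eq_add_neg] using
      (hL.comp (tendsto_atTop_add_const_right atTop (-η) tendsto_id)).sub hL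
  filter_upwards [hdiff.eventually_lt_const (show 0 < c * η * (ε / 2) by positivity)] with t ht
  have hle := hu.mul_integral_localDensity_le hdim hc hη.le t
  refine lt_of_mul_lt_mul_left (a := c * η) ?_ (by positivity)
  linarith [mul_lt_mul_of_pos_left hηε (mul_pos hc₀ hη)]

end IsFiniteEnergyWave

end LocalEnergyDecay

/-! ### Averaging in time -/

section TimeAverage

/-- The two summands carry the weights `η` and `η⁻¹` in one order on the part `χ` and in the
other order on the part `1 - χ`. -/
theorem norm_add_sq_le_of_mem_Icc {V : Type*} [SeminormedAddCommGroup V] {η χ : ℝ} (hη : 0 < η)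
    (hχ : χ ∈ Set.Icc 0 1) (p q : V) :
    ‖p + q‖ ^ 2 ≤ (1 + η) * (‖p‖ ^ 2 + ‖q‖ ^ 2) + η⁻¹ * (χ * ‖q‖ ^ 2)
      + η⁻¹ * (‖p‖ ^ 2 - χ * ‖p‖ ^ 2) := by
  have hyoung (a b : ℝ) : 2 * (a * b) ≤ η * a ^ 2 + η⁻¹ * b ^ 2 := by
    have hsq : 0 ≤ η⁻¹ * (η * a - b) ^ 2 := by positivity
    have hη₁ : η * η⁻¹ = 1 := mul_inv_cancel₀ hη.ne'
    linear_combination hsq + (η * a ^ 2 - 2 * a * b) * hη₁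
  have hpq := mul_le_mul_of_nonneg_left (hyoung ‖p‖ ‖q‖) hχ.1
  have hqp := mul_le_mul_of_nonneg_left (hyoung ‖q‖ ‖p‖) (sub_nonneg.2 hχ.2)
  have hp : 0 ≤ (1 - χ) * (η * ‖p‖ ^ 2) := mul_nonneg (sub_nonneg.2 hχ.2) (by positivity)
  have hq : 0 ≤ χ * (η * ‖q‖ ^ 2) := mul_nonneg hχ.1 (by positivity)
  linarith [pow_le_pow_left₀ (norm_nonneg _) (norm_add_le p q) 2]

theorem one_le_mul_weight_pow {E : Type*} [NormedAddCommGroup E] {R : ℝ} {x : E} (hx : ‖x‖ ≤ R) :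
    1 ≤ (1 + R ^ 2) ^ 4 * weight x ^ 8 := by
  have h : 1 ≤ (1 + R ^ 2) * weight x ^ 2 := by
    rw [mul_comm]
    calc 1 = weight x ^ 2 * (1 + ‖x‖ ^ 2) := (weight_sq_mul_one_add_norm_sq x).symm
      _ ≤ weight x ^ 2 * (1 + R ^ 2) := by gcongr
  calc 1 ≤ ((1 + R ^ 2) * weight x ^ 2) ^ 4 := one_le_pow₀ h
    _ = (1 + R ^ 2) ^ 4 * weight x ^ 8 := by ring

theorem cutoff_mul_energyDensity_le {E : Type*} [NormedAddCommGroup E] [InnerProductSpace ℝ E]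
    [CompleteSpace E] {R : ℝ} (hR : 0 < R) (u : E → ℝ → ℝ) (x : E) (t : ℝ) :
    cutoff R x * energyDensity u x t ≤ (1 + R ^ 2) ^ 4 * localDensity u x t := by
  rcases le_total R ‖x‖ with hx | hx
  · rw [cutoff_eq_zero hR hx, zero_mul]
    exact mul_nonneg (by positivity) (localDensity_nonneg u x t)
  · have he := energyDensity_nonneg u x t
    calc cutoff R x * energyDensity u x t ≤ 1 * (energyDensity u x t + u x t ^ 2) := by
          gcongr
          · exact cutoff_le_one R x
          · exact le_add_of_nonneg_right (sq_nonneg _)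
      _ ≤ (1 + R ^ 2) ^ 4 * weight x ^ 8 * (energyDensity u x t + u x t ^ 2) := by
          gcongr
          exact one_le_mul_weight_pow hx
      _ = (1 + R ^ 2) ^ 4 * localDensity u x t := by rw [localDensity, mul_assoc]

/-- The average of a function of space and time and its translate by the time `s`. -/
noncomputable def timeAverage {E : Type*} (s : ℝ) (u : E → ℝ → ℝ) (x : E) (t : ℝ) : ℝ :=
  1 / 2 * u x t + 1 / 2 * u x (t + s)

variable {E : Type*} [NormedAddCommGroup E] [InnerProductSpace ℝ E] [FiniteDimensional ℝ E]
  {u v : E → ℝ → ℝ} {K : ℝ}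

namespace IsFreeWave

theorem four_mul_energyDensity_timeAverage (hu : IsFreeWave u) (s : ℝ) (x : E) (t : ℝ) :
    4 * energyDensity (timeAverage s u) x t
      = ‖∇ (fun y => u y t) x + ∇ (fun y => u y (t + s)) x‖ ^ 2
        + ‖deriv (u x) t + deriv (u x) (t + s)‖ ^ 2 := by
  have hgrad : ∇ (fun y => timeAverage s u y t) x
      = (1 / 2 : ℝ) • (∇ (fun y => u y t) x + ∇ (fun y => u y (t + s)) x) := by
    rw [smul_add]
    exact hu.gradient_linearCombination (hu.translate s) _ _ x t
  have hderiv : deriv (timeAverage s u x) t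
      = 1 / 2 * (deriv (u x) t + deriv (u x) (t + s)) := by
    rw [mul_add, ← deriv_comp_add_const]
    exact hu.deriv_linearCombination (hu.translate s) _ _ x t
  rw [energyDensity, hgrad, hderiv, norm_smul, Real.norm_of_nonneg one_half_pos.le,
    Real.norm_eq_abs, sq_abs]
  ring

theorem four_mul_energyDensity_timeAverage_le (hu : IsFreeWave u) {η R : ℝ} (hη : 0 < η)
    (hR : 0 < R) (s : ℝ) (x : E) (t : ℝ) :
    4 * energyDensity (timeAverage s u) x t
      ≤ (1 + η) * (energyDensity u x t + energyDensity u x (t + s))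
        + η⁻¹ * ((1 + R ^ 2) ^ 4 * localDensity u x (t + s))
        + η⁻¹ * (energyDensity u x t - cutoff R x * energyDensity u x t) := by
  have hχ : cutoff R x ∈ Set.Icc 0 1 := ⟨cutoff_nonneg R x, cutoff_le_one R x⟩
  have hgrad := norm_add_sq_le_of_mem_Icc hη hχ (∇ (fun y => u y t) x)
    (∇ (fun y => u y (t + s)) x)
  have hderiv := norm_add_sq_le_of_mem_Icc hη hχ (deriv (u x) t) (deriv (u x) (t + s))
  have hlocal := mul_le_mul_of_nonneg_left (cutoff_mul_energyDensity_le hR u x (t + s))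
    (inv_pos.2 hη).le
  rw [hu.four_mul_energyDensity_timeAverage]
  simp only [energyDensity, Real.norm_eq_abs, sq_abs] at hgrad hderiv hlocal ⊢
  linarith

end IsFreeWave

variable [MeasurableSpace E] [BorelSpace E]

namespace IsFiniteEnergyWave

theorem timeAverage (hu : IsFiniteEnergyWave u K) (s : ℝ) :
    IsFiniteEnergyWave (timeAverage s u) K :=
  (hu.linearCombination (hu.translate s) (1 / 2) (1 / 2)).mono (by linarith)

theorem four_mul_integral_energyDensity_timeAverage_le (hu : IsFiniteEnergyWave u K) {η R : ℝ}
    (hη : 0 < η) (hR : 0 < R) (s t : ℝ) :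
    4 * ∫ x, energyDensity (FreeWave.timeAverage s u) x t
      ≤ (1 + η) * (K + K) + η⁻¹ * ((1 + R ^ 2) ^ 4 * ∫ x, localDensity u x (t + s))
        + η⁻¹ * ((∫ x, energyDensity u x t) - ∫ x, cutoff R x * energyDensity u x t) := by
  have he := hu.integrable_energyDensity
  have hχe := integrable_cutoff_mul hR (hu.continuous_energyDensity t)
  have hsum := ((he t).add (he (t + s))).const_mul (1 + η)
  have hlocal := ((hu.integrable_localDensity (t + s)).const_mul ((1 + R ^ 2) ^ 4)).const_mul η⁻¹
  have hfar := ((he t).sub hχe).const_mul η⁻¹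
  have hle := integral_mono (((hu.timeAverage s).integrable_energyDensity t).const_mul 4)
    ((hsum.add hlocal).add hfar) fun x => hu.four_mul_energyDensity_timeAverage_le hη hR s x t
  rw [integral_add' (hsum.add hlocal) hfar, integral_add' hsum hlocal] at hle
  simp only [integral_const_mul] at hle
  rw [integral_add' (he t) (he (t + s)), integral_sub' (he t) hχe] at hle
  refine hle.trans ?_
  gcongr
  · exact hu.integral_energyDensity_le t
  · exact hu.integral_energyDensity_le (t + s)

/-- The part of the wave in a large ball at time `0` and the part outside it interact weakly with
the late translate, so averaging essentially halves the energy. -/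
theorem exists_timeAverage (hdim : 2 < Module.finrank ℝ E) (hu : IsFiniteEnergyWave u K) {δ : ℝ}
    (hδ : 0 < δ) : ∃ s ≥ 0, IsFiniteEnergyWave (FreeWave.timeAverage s u) (K / 2 + δ) := by
  have hK := hu.bound_nonneg
  obtain ⟨η, hη, hηK⟩ : ∃ η > 0, η * K ≤ δ :=
    ⟨δ / (K + 1), by positivity, by
      rw [div_mul_eq_mul_div, div_le_iff₀ (by positivity)]
      linarith⟩
  obtain ⟨R, hR, hRδ⟩ : ∃ R > 0,
      η⁻¹ * ((∫ x, energyDensity u x 0) - ∫ x, cutoff R x * energyDensity u x 0) < δ := by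
    have h := ((tendsto_integral_cutoff_mul (hu.integrable_energyDensity 0)).const_sub
      (∫ x, energyDensity u x 0)).const_mul η⁻¹
    rw [sub_self, mul_zero] at h
    exact ((eventually_gt_atTop 0).and (h.eventually_lt_const hδ)).exists
  obtain ⟨s, hs, hsδ⟩ : ∃ s ≥ 0, η⁻¹ * ((1 + R ^ 2) ^ 4 * ∫ x, localDensity u x s) < δ := by
    have h := ((hu.tendsto_integral_localDensity hdim).const_mul ((1 + R ^ 2) ^ 4)).const_mul η⁻¹
    rw [mul_zero, mul_zero] at h
    exact ((eventually_ge_atTop 0).and (h.eventually_lt_const hδ)).exists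
  have havg := hu.timeAverage s
  refine ⟨s, hs, havg.toIsFreeWave, fun t _ => ⟨havg.integrable_energyDensity t, ?_⟩,
    havg.integrable_weight_sq_mul_sq⟩
  rw [havg.integral_energyDensity_eq t 0]
  have hle := hu.four_mul_integral_energyDensity_timeAverage_le hη hR s 0
  rw [zero_add] at hle
  linarith

theorem integralBoundedOn_sq_sub_timeAverage (hv : IsFiniteEnergyWave v K)
    (hu : ∀ t, Continuous fun x => u x t) {B s : ℝ} (hs : 0 ≤ s)
    (hB : IntegralBoundedOn Set.univ (fun x t => (u x t - v x t) ^ 2) B) :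
    IntegralBoundedOn Set.univ (fun x t => (u x t - FreeWave.timeAverage s v x t) ^ 2)
      (2 * B + 1 / 2 * (exp s * (K * s))) := fun t ht => by
  obtain ⟨hint, hle⟩ := hB t ht
  obtain ⟨hint', hle'⟩ := hv.integrable_and_integral_sq_sub_le hv.integralBoundedOn_energyDensity
    (le_add_of_nonneg_right hs : t ≤ t + s)
  rw [add_sub_cancel_left] at hle'
  have hsum := (hint.const_mul 2).add (hint'.const_mul (1 / 2))
  have hpoint : ∀ x, (u x t - FreeWave.timeAverage s v x t) ^ 2
      ≤ 2 * (u x t - v x t) ^ 2 + 1 / 2 * (v x (t + s) - v x t) ^ 2 := fun x => by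
    rw [FreeWave.timeAverage]
    linarith [sq_nonneg ((u x t - v x t) + 1 / 2 * (v x (t + s) - v x t))]
  have hdiff : Integrable fun x => (u x t - FreeWave.timeAverage s v x t) ^ 2 :=
    hsum.mono' (((hu t).sub ((hv.timeAverage s).continuous_space t)).pow 2).aestronglyMeasurable
      (Eventually.of_forall fun x => by
        rw [Real.norm_of_nonneg (sq_nonneg _)]
        exact hpoint x)
  refine ⟨hdiff, (integral_mono hdiff hsum hpoint).trans ?_⟩
  rw [integral_add' (hint.const_mul 2) (hint'.const_mul (1 / 2)), integral_const_mul,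
    integral_const_mul]
  gcongr

theorem exists_energy_div_two_pow_approx (hdim : 2 < Module.finrank ℝ E)
    (hu : IsFiniteEnergyWave u K) {ε : ℝ} (hε : 0 < ε) (n : ℕ) :
    ∃ v B, IsFiniteEnergyWave v (K / 2 ^ n + ε) ∧
      IntegralBoundedOn Set.univ (fun x t => (u x t - v x t) ^ 2) B := by
  induction n with
  | zero => exact ⟨u, 0, hu.mono (by linarith), fun t _ => by simp⟩
  | succ n ih =>
    obtain ⟨v, B, hv, hB⟩ := ih
    obtain ⟨s, hs, hvs⟩ := hv.exists_timeAverage hdim (half_pos hε)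
    refine ⟨_, _, ?_, hv.integralBoundedOn_sq_sub_timeAverage hu.continuous_space hs hB⟩
    convert hvs using 1
    ring

theorem exists_small_energy_approx (hdim : 2 < Module.finrank ℝ E)
    (hu : IsFiniteEnergyWave u K) {ε : ℝ} (hε : 0 < ε) : ∃ v B, IsFiniteEnergyWave v ε ∧
      IntegralBoundedOn Set.univ (fun x t => (u x t - v x t) ^ 2) B := by
  have hlim : Tendsto (fun n : ℕ => K / 2 ^ n) atTop (nhds 0) :=
    (tendsto_pow_atTop_atTop_of_one_lt one_lt_two).const_div_atTop K
  obtain ⟨n, hn⟩ := (hlim.eventually_le_const (half_pos hε)).exists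
  obtain ⟨v, B, hv, hB⟩ := hu.exists_energy_div_two_pow_approx hdim (half_pos hε) n
  exact ⟨v, B, hv.mono (by linarith), hB⟩

end IsFiniteEnergyWave

end TimeAverage

/-! ### Decay of the Hardy norm -/

theorem sq_div_norm_sq_le {E : Type*} [NormedAddCommGroup E] {R : ℝ} (hR : 0 < R) (x : E) (a : ℝ) :
    a ^ 2 / ‖x‖ ^ 2
      ≤ (1 + R ^ 2) ^ 4 * ((weight x ^ 4 * a) ^ 2 / ‖x‖ ^ 2) + (R ^ 2)⁻¹ * a ^ 2 := by
  rcases le_total R ‖x‖ with hx | hx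
  · refine le_add_of_nonneg_of_le (by positivity) ?_
    rw [div_eq_inv_mul]
    gcongr
  · refine le_add_of_le_of_nonneg ?_ (by positivity)
    calc a ^ 2 / ‖x‖ ^ 2 ≤ (1 + R ^ 2) ^ 4 * weight x ^ 8 * (a ^ 2 / ‖x‖ ^ 2) :=
          le_mul_of_one_le_left (by positivity) (one_le_mul_weight_pow hx)
      _ = (1 + R ^ 2) ^ 4 * ((weight x ^ 4 * a) ^ 2 / ‖x‖ ^ 2) := by ring

theorem sq_div_norm_sq_le_add {E : Type*} [NormedAddCommGroup E] {R : ℝ} (hR : 0 < R) (x : E)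
    (a b : ℝ) :
    a ^ 2 / ‖x‖ ^ 2 ≤ 2 * (1 + R ^ 2) ^ 4 * ((weight x ^ 4 * (a - b)) ^ 2 / ‖x‖ ^ 2)
      + 2 * (R ^ 2)⁻¹ * (a - b) ^ 2 + 2 * (b ^ 2 / ‖x‖ ^ 2) := by
  have hsplit : a ^ 2 / ‖x‖ ^ 2 ≤ 2 * ((a - b) ^ 2 / ‖x‖ ^ 2) + 2 * (b ^ 2 / ‖x‖ ^ 2) := by
    rw [← mul_div_assoc, ← mul_div_assoc, ← add_div]
    gcongr
    linarith [sq_nonneg (a - 2 * b)]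
  linarith [sq_div_norm_sq_le hR x (a - b)]

section Decay

variable {E : Type*} [NormedAddCommGroup E] [InnerProductSpace ℝ E] [FiniteDimensional ℝ E]
  {u v : E → ℝ → ℝ} {K ε B : ℝ}

theorem IsFreeWave.sq_norm_gradient_weight_mul_le (hu : IsFreeWave u) (x : E) (t : ℝ) :
    ‖∇ (fun y => weight y ^ 4 * u y t) x‖ ^ 2 ≤ 32 * localDensity u x t := by
  have hgrad : ∇ (fun y => weight y ^ 4 * u y t) x
      = weight x ^ 4 • ∇ (fun y => u y t) x + (u x t * -(4 * weight x ^ 6)) • x := by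
    rw [(hasGradientAt_mul (hasGradientAt_weight_pow 4 x) (hu.hasGradientAt x t)).gradient,
      smul_smul]
    norm_cast
  have hpar := parallelogram_law_with_norm ℝ (weight x ^ 4 • ∇ (fun y => u y t) x)
    ((u x t * -(4 * weight x ^ 6)) • x)
  simp only [norm_smul, mul_pow, Real.norm_eq_abs, sq_abs] at hpar
  have hw : ‖x‖ ^ 2 * weight x ^ 12 ≤ weight x ^ 8 := by
    have hg := (weight_pos x).le
    calc ‖x‖ ^ 2 * weight x ^ 12 = (weight x * ‖x‖) ^ 2 * weight x ^ 2 * weight x ^ 8 := by ring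
      _ ≤ 1 * 1 * weight x ^ 8 := by
          gcongr
          · exact pow_le_one₀ (by positivity) (weight_mul_norm_le_one x)
          · exact pow_le_one₀ hg (weight_le_one x)
      _ = weight x ^ 8 := by ring
  have hgu := mul_nonneg (pow_nonneg (weight_pos x).le 8) (sq_nonneg ‖∇ (fun y => u y t) x‖)
  have hut := mul_nonneg (pow_nonneg (weight_pos x).le 8) (sq_nonneg (deriv (u x) t))
  rw [hgrad, localDensity, energyDensity]
  linarith [mul_le_mul_of_nonneg_right hw (sq_nonneg (u x t)),
    sq_nonneg ‖weight x ^ 4 • ∇ (fun y => u y t) x - (u x t * -(4 * weight x ^ 6)) • x‖]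

variable [MeasurableSpace E] [BorelSpace E]

namespace IsFiniteEnergyWave

theorem integrable_and_integral_weight_mul_sq_div_norm_sq_le (hdim : 2 < Module.finrank ℝ E)
    (hu : IsFiniteEnergyWave u K) (t : ℝ) :
    Integrable (fun x => (weight x ^ 4 * u x t) ^ 2 / ‖x‖ ^ 2) ∧
      ∫ x, (weight x ^ 4 * u x t) ^ 2 / ‖x‖ ^ 2 ≤ 128 * ∫ x, localDensity u x t := by
  have hf : ContDiff ℝ 1 fun x => weight x ^ 4 * u x t :=
    (contDiff_weight.pow 4).mul ((hu.contDiff_space t).of_le one_le_two)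
  have hlocal := (hu.integrable_localDensity t).const_mul 32
  have hgrad : Integrable fun x => ‖∇ (fun y => weight y ^ 4 * u y t) x‖ ^ 2 :=
    hlocal.mono' ((contDiff_gradient (n := 0) hf).continuous.norm.pow 2).aestronglyMeasurable <|
      Eventually.of_forall fun x => by
        rw [Real.norm_of_nonneg (sq_nonneg _)]
        exact hu.sq_norm_gradient_weight_mul_le x t
  have hint : Integrable fun x => weight x ^ 2 * (weight x ^ 4 * u x t) ^ 2 :=
    (hu.integrable_weight_sq_mul_sq t).mono'
      ((continuous_weight.pow 2).mul (hf.continuous.pow 2)).aestronglyMeasurable <|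
      Eventually.of_forall fun x => by
        rw [Real.norm_of_nonneg (by positivity), mul_pow, ← pow_mul]
        have hw := weight_pos x
        gcongr
        exact mul_le_of_le_one_left (sq_nonneg _) (pow_le_one₀ hw.le (weight_le_one x))
  refine ⟨(hardy_inequality hdim hf hint hgrad).1, ?_⟩
  have hle := integral_mono hgrad hlocal fun x => hu.sq_norm_gradient_weight_mul_le x t
  rw [integral_const_mul] at hle
  linarith [integral_sq_div_norm_sq_le_four_mul hdim hf hint hgrad]

theorem sub (hu : IsFiniteEnergyWave u K) (hv : IsFiniteEnergyWave v ε) :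
    IsFiniteEnergyWave (fun x t => u x t - v x t) (2 * K + 2 * ε) := by
  simpa [sub_eq_add_neg] using hu.linearCombination hv 1 (-1)

theorem integral_sq_div_norm_sq_le_of_approx (hdim : 2 < Module.finrank ℝ E)
    (hu : IsFiniteEnergyWave u K) (hv : IsFiniteEnergyWave v ε)
    (hB : IntegralBoundedOn Set.univ (fun x t => (u x t - v x t) ^ 2) B) {R : ℝ} (hR : 0 < R)
    (t : ℝ) :
    ∫ x, u x t ^ 2 / ‖x‖ ^ 2 ≤ 2 * (1 + R ^ 2) ^ 4 *
        (128 * ∫ x, localDensity (fun x t => u x t - v x t) x t)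
      + 2 * (R ^ 2)⁻¹ * B + 2 * (4 * ε) := by
  obtain ⟨hlocal, hlocal_le⟩ :=
    (hu.sub hv).integrable_and_integral_weight_mul_sq_div_norm_sq_le hdim t
  obtain ⟨hdiff, hdiff_le⟩ := hB t (Set.mem_univ t)
  have hlocal' := hlocal.const_mul (2 * (1 + R ^ 2) ^ 4)
  have hdiff' := hdiff.const_mul (2 * (R ^ 2)⁻¹)
  have hsmall := (hv.integrable_sq_div_norm_sq hdim t).const_mul 2
  refine (integral_mono (hu.integrable_sq_div_norm_sq hdim t) ((hlocal'.add hdiff').add hsmall)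
    fun x => sq_div_norm_sq_le_add hR x (u x t) (v x t)).trans ?_
  rw [integral_add' (hlocal'.add hdiff') hsmall, integral_add' hlocal' hdiff', integral_const_mul,
    integral_const_mul, integral_const_mul]
  gcongr
  exact hv.integral_sq_div_norm_sq_le hdim t

theorem tendsto_integral_sq_div_norm_sq (hdim : 2 < Module.finrank ℝ E)
    (hu : IsFiniteEnergyWave u K) :
    Tendsto (fun t => ∫ x, u x t ^ 2 / ‖x‖ ^ 2) atTop (nhds 0) := by
  refine tendsto_order.2 ⟨fun a ha => Eventually.of_forall fun t =>
    ha.trans_le (integral_nonneg fun x => by positivity), fun ε hε => ?_⟩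
  obtain ⟨v, B, hv, hB⟩ := hu.exists_small_energy_approx hdim (show 0 < ε / 24 by positivity)
  obtain ⟨R, hR, hRε⟩ : ∃ R > 0, 2 * (R ^ 2)⁻¹ * B < ε / 3 := by
    have h : Tendsto (fun R : ℝ => 2 * (R ^ 2)⁻¹ * B) atTop (nhds 0) := by
      simpa using (((tendsto_pow_atTop two_ne_zero).inv_tendsto_atTop (𝕜 := ℝ)).const_mul
        2).mul_const B
    exact ((eventually_gt_atTop 0).and (h.eventually_lt_const (by positivity))).exists
  have hlocal := (((hu.sub hv).tendsto_integral_localDensity hdim).const_mul 128).const_mul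
    (2 * (1 + R ^ 2) ^ 4)
  rw [mul_zero, mul_zero] at hlocal
  filter_upwards [hlocal.eventually_lt_const (show 0 < ε / 3 by positivity)] with t ht
  linarith [hu.integral_sq_div_norm_sq_le_of_approx hdim hv hB hR t]

end IsFiniteEnergyWave

end Decay

theorem laplacian_eq_sum_fderiv_single {ι : Type*} [Fintype ι] [DecidableEq ι]
    {f : EuclideanSpace ℝ ι → ℝ} (hf : ContDiff ℝ 2 f) (x : EuclideanSpace ℝ ι) :
    Δ f x = ∑ i, fderiv ℝ (fun y => fderiv ℝ f y (EuclideanSpace.single i 1)) x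
      (EuclideanSpace.single i 1) := by
  rw [InnerProductSpace.laplacian_eq_iteratedFDeriv_orthonormalBasis f
    (EuclideanSpace.basisFun ι ℝ)]
  refine Finset.sum_congr rfl fun i _ => ?_
  have hf' : DifferentiableAt ℝ (fderiv ℝ f) x :=
    (hf.fderiv_right (m := 1) le_rfl).differentiable one_ne_zero x
  rw [fderiv_clm_apply hf' (differentiableAt_const _)]
  simp [iteratedFDeriv_two_apply]

end FreeWave

open FreeWave in
theorem hardy_weighted_decay_free_wave_general {E : Type*} [NormedAddCommGroup E]
    [InnerProductSpace ℝ E] [FiniteDimensional ℝ E] [MeasurableSpace E] [BorelSpace E]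
    (hdim : 2 < Module.finrank ℝ E) {u : E → ℝ → ℝ} {K : ℝ} (hu : IsFreeWave u)
    (hE : IntegralBoundedOn Set.univ (energyDensity u) K) :
    Tendsto (fun t => ∫ x, u x t ^ 2 / ‖x‖ ^ 2) atTop (nhds 0) := by
  by_cases h : ∃ t₀, Integrable fun x => u x t₀ ^ 2 / ‖x‖ ^ 2
  · obtain ⟨t₀, h₀⟩ := h
    have : Nontrivial E := Module.nontrivial_of_finrank_pos (R := ℝ) (by omega)
    have hweight : Integrable fun x => weight x ^ 2 * u x t₀ ^ 2 :=
      h₀.mono' ((continuous_weight.pow 2).mul ((hu.continuous_space t₀).pow 2)).aestronglyMeasurable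
        (ae_ne_zero.mono fun x hx => by
          rw [Real.norm_of_nonneg (by positivity)]
          exact weight_sq_mul_le_div_norm_sq hx (u x t₀))
    exact (hu.isFiniteEnergyWave hE hweight).tendsto_integral_sq_div_norm_sq hdim
  -- Outside the Hardy space the Bochner integral takes the junk value `0` at every time.
  · simp only [fun t => integral_undef (not_exists.1 h t), tendsto_const_nhds]

/-- For a finite-energy free wave on `ℝ^d`, `d ≥ 3`, the Hardy-weighted quantity
`∫ |u(x,t)|²/|x|² dx` tends to `0` as `t → +∞`. -/
theorem hardy_weighted_decay_free_wave (d : ℕ) (hd : 3 ≤ d)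
    (u : EuclideanSpace ℝ (Fin d) → ℝ → ℝ)
    (hu : ContDiff ℝ 2 (Function.uncurry u))
    (hwave : ∀ (x : EuclideanSpace ℝ (Fin d)) (t : ℝ),
      deriv (fun s => deriv (fun s' => u x s') s) t
        - ∑ i : Fin d, fderiv ℝ (fun y => fderiv ℝ (fun z => u z t) y
            (EuclideanSpace.single i 1)) x (EuclideanSpace.single i 1) = 0)
    (hfinite : ∀ t : ℝ, Integrable (fun x : EuclideanSpace ℝ (Fin d) =>
      ‖gradient (fun y => u y t) x‖ ^ 2 + (deriv (u x) t) ^ 2))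
    (hconserve : ∀ t : ℝ,
      (∫ x : EuclideanSpace ℝ (Fin d),
        (‖gradient (fun y => u y t) x‖ ^ 2 + (deriv (u x) t) ^ 2))
      = ∫ x : EuclideanSpace ℝ (Fin d),
        (‖gradient (fun y => u y 0) x‖ ^ 2 + (deriv (u x) 0) ^ 2)) :
    Tendsto (fun t : ℝ => ∫ x : EuclideanSpace ℝ (Fin d), (u x t) ^ 2 / ‖x‖ ^ 2)
      atTop (nhds 0) :=
  hardy_weighted_decay_free_wave_general (by rwa [finrank_euclideanSpace_fin])
    ⟨hu, fun x t => (sub_eq_zero.1 (hwave x t)).trans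
      (FreeWave.laplacian_eq_sum_fderiv_single (hu.comp (contDiff_prodMk_left t)) x).symm⟩
    fun t _ => ⟨hfinite t, (hconserve t).le⟩
end
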